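/- Weak comparison of H with T₄ − T₂ (Lemma 3.3(ii), estimate (pi22)): For every h ∈ L∞(I_δ) and every φ ∈ C₂ supported in I_{√ε}, one has |∫_{I_{√ε}} (H + T_{4,(g,f)} − T_{2,f})h(α)·φ(α) dα| + |∫_{I_{√ε}} (H + T_{4,(f,g)} − T_{2,g})h(α)·φ(α) dα| ≲ ε·log(1/ε)·‖h‖_{L∞(I_{2√ε})}. -/

import Mathlib

noncomputable section
open Set MeasureTheory Filter Real

/-- The principal value at `α` of the integral `∫_ℝ F(β) dβ`, understood as the limit of the
integrals over `{β : r < |α − β|}` as `r → 0⁺`. -/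
def pvI (F : ℝ → ℝ) (α : ℝ) : ℝ :=
  limUnder (nhdsWithin (0:ℝ) (Ioi 0)) (fun r => ∫ β in {β : ℝ | r < |α - β|}, F β)

/-- `ψ` is a smooth even cutoff, with values in `[0,1]`, supported in `[−1,1]`,
equal to `1` on `[−1/2,1/2]`. -/
def IsCutoff (ψ : ℝ → ℝ) : Prop :=
  ContDiff ℝ (⊤ : ℕ∞) ψ ∧ (∀ x : ℝ, ψ (-x) = ψ x) ∧ (∀ x : ℝ, ψ x ∈ Icc (0:ℝ) 1) ∧
    (∀ x : ℝ, 1 < |x| → ψ x = 0) ∧ (∀ x : ℝ, |x| ≤ 1/2 → ψ x = 1)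

/-- The rescaled cutoff `ψ_r(x) = ψ(x/r)`. -/
def scut (ψ : ℝ → ℝ) (r x : ℝ) : ℝ := ψ (x / r)

/-- `X̃(α) = 2ε + f(α) + g(α)`. -/
def Xt (ε : ℝ) (f g : ℝ → ℝ) (α : ℝ) : ℝ := 2 * ε + f α + g α

/-- The operator `T_{1,f}`. -/
def T1 (ψ : ℝ → ℝ) (ε : ℝ) (f : ℝ → ℝ) (h : ℝ → ℝ) (α : ℝ) : ℝ :=
  (2 * π)⁻¹ * pvI (fun β =>
    (f α - f β) / ((α - β) ^ 2 + (f α - f β) ^ 2) * h β * scut ψ (Real.sqrt ε) (α - β)) α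

/-- The operator `T_{2,f}`. -/
def T2 (ψ : ℝ → ℝ) (ε : ℝ) (f : ℝ → ℝ) (h : ℝ → ℝ) (α : ℝ) : ℝ :=
  (2 * π)⁻¹ * pvI (fun β =>
    (α - β) / ((α - β) ^ 2 + (f α - f β) ^ 2) * h β * scut ψ (Real.sqrt ε) (α - β)) α

/-- The operator `T_{3,(f,g)}`. -/
def T3 (ψ : ℝ → ℝ) (ε : ℝ) (f g : ℝ → ℝ) (h : ℝ → ℝ) (α : ℝ) : ℝ :=
  (2 * π)⁻¹ * ∫ β : ℝ,
    (2 * ε + f α + g β) / ((α - β) ^ 2 + (2 * ε + f α + g β) ^ 2) * h β *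
      scut ψ (Real.sqrt ε) (α - β)

/-- The operator `T_{4,(f,g)}`. -/
def T4 (ψ : ℝ → ℝ) (ε : ℝ) (f g : ℝ → ℝ) (h : ℝ → ℝ) (α : ℝ) : ℝ :=
  (2 * π)⁻¹ * ∫ β : ℝ,
    (α - β) / ((α - β) ^ 2 + (2 * ε + f α + g β) ^ 2) * h β * scut ψ (Real.sqrt ε) (α - β)

/-- The kernel of the operator `H`. -/
def Hker (ψ : ℝ → ℝ) (ε : ℝ) (f g : ℝ → ℝ) (α β : ℝ) : ℝ :=
  (α - β)⁻¹ * ((Xt ε f g α) ^ 2 / ((α - β) ^ 2 + (Xt ε f g α) ^ 2)) *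
    scut ψ (Real.sqrt ε / 2 ^ 6) α * scut ψ (Real.sqrt ε / 2 ^ 6) (α - β)

/-- The kernel of the operator `M`. -/
def Mker (ψ : ℝ → ℝ) (ε : ℝ) (f g : ℝ → ℝ) (α β : ℝ) : ℝ :=
  (Xt ε f g α) / ((α - β) ^ 2 + (Xt ε f g α) ^ 2) *
    scut ψ (Real.sqrt ε / 2 ^ 6) α * scut ψ (Real.sqrt ε / 2 ^ 6) (α - β)

/-- The operator `H` (a principal value integral in the second variable of the kernel). -/
def Hop (ψ : ℝ → ℝ) (ε : ℝ) (f g : ℝ → ℝ) (h : ℝ → ℝ) (α : ℝ) : ℝ :=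
  (2 * π)⁻¹ * pvI (fun β => Hker ψ ε f g α β * h β) α

/-- The adjoint operator `H*` (integration of the kernel of `H` in its first variable). -/
def Hstar (ψ : ℝ → ℝ) (ε : ℝ) (f g : ℝ → ℝ) (φ : ℝ → ℝ) (β : ℝ) : ℝ :=
  (2 * π)⁻¹ * pvI (fun α => Hker ψ ε f g α β * φ α) β

/-- The operator `M`. -/
def Mop (ψ : ℝ → ℝ) (ε : ℝ) (f g : ℝ → ℝ) (h : ℝ → ℝ) (α : ℝ) : ℝ :=
  (2 * π)⁻¹ * ∫ β : ℝ, Mker ψ ε f g α β * h β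

/-- The adjoint operator `M*` (integration of the kernel of `M` in its first variable). -/
def Mstar (ψ : ℝ → ℝ) (ε : ℝ) (f g : ℝ → ℝ) (φ : ℝ → ℝ) (β : ℝ) : ℝ :=
  (2 * π)⁻¹ * ∫ α : ℝ, Mker ψ ε f g α β * φ α

/-- The class `C₂` of test functions: `C¹` functions compactly supported in `I_δ = (−δ,δ)` with
`|φ⁽ᵏ⁾(α)| ≤ ε/(ε^{2+k} + |α|^{2+k})` on `I_δ` for `k ∈ {0,1}`. -/
def InC2 (δ ε : ℝ) (φ : ℝ → ℝ) : Prop :=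
  ContDiff ℝ 1 φ ∧ HasCompactSupport φ ∧ tsupport φ ⊆ Ioo (-δ) δ ∧
    ∀ α ∈ Ioo (-δ) δ,
      |φ α| ≤ ε / (ε ^ 2 + |α| ^ 2) ∧ |deriv φ α| ≤ ε / (ε ^ 3 + |α| ^ 3)

/-- The standing hypotheses on `f, g : (−δ,δ) → ℝ`: they are `C⁵`, with
`‖f‖_{C³} + ‖g‖_{C³} ≤ A`, `f(0) = f'(0) = g(0) = g'(0) = 0`, and
`f(α) + g(β) ≥ −ε` for `α, β ∈ (−4√ε, 4√ε)`. -/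
def GoodFG (δ A ε : ℝ) (f g : ℝ → ℝ) : Prop :=
  ContDiffOn ℝ 5 f (Ioo (-δ) δ) ∧ ContDiffOn ℝ 5 g (Ioo (-δ) δ) ∧
    f 0 = 0 ∧ g 0 = 0 ∧
    derivWithin f (Ioo (-δ) δ) 0 = 0 ∧ derivWithin g (Ioo (-δ) δ) 0 = 0 ∧
    (∀ x ∈ Ioo (-δ) δ, ∀ i : ℕ, i ≤ 3 →
      |iteratedDerivWithin i f (Ioo (-δ) δ) x| + |iteratedDerivWithin i g (Ioo (-δ) δ) x| ≤ A) ∧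
    (∀ α ∈ Ioo (-(4 * Real.sqrt ε)) (4 * Real.sqrt ε),
      ∀ β ∈ Ioo (-(4 * Real.sqrt ε)) (4 * Real.sqrt ε), -ε ≤ f α + g β)
structure BH (h : ℝ → ℝ) (M a : ℝ) : Prop where
  meas : Measurable h
  bd : ∀ x, |h x| ≤ M
  supp : ∀ x, x ∉ Ioo (-a) a → h x = 0

lemma BH.int_mul {h : ℝ → ℝ} {M a : ℝ} (H : BH h M a) {k : ℝ → ℝ}
    (hk : IntegrableOn k (Ioo (-a) a)) : Integrable (fun β => h β * k β) := by
  have h1 : IntegrableOn (fun β => h β * k β) (Ioo (-a) a) := by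
    apply Integrable.bdd_mul (c := M) hk H.meas.aestronglyMeasurable
    exact Eventually.of_forall (fun x => by simpa using H.bd x)
  apply (integrableOn_iff_integrable_of_support_subset _).1 h1
  intro x hx
  by_contra hc
  apply hx
  simp [H.supp x hc]

lemma BH.int_bdd {h : ℝ → ℝ} {M a : ℝ} (H : BH h M a) {k : ℝ → ℝ} {C : ℝ}
    (hk : Measurable k) (hb : ∀ β ∈ Ioo (-a) a, |k β| ≤ C) : Integrable (fun β => h β * k β) := by
  apply H.int_mul
  apply Measure.integrableOn_of_bounded (M := C) (by simp) hk.aestronglyMeasurable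
  exact (ae_restrict_iff' measurableSet_Ioo).2 (Eventually.of_forall (fun x hx => by simpa using hb x hx))

lemma BH.abs_int_le {h : ℝ → ℝ} {M a : ℝ} (H : BH h M a) {k u : ℝ → ℝ}
    (hu : IntegrableOn u (Ioo (-a) a)) (hb : ∀ β ∈ Ioo (-a) a, |k β| ≤ u β) :
    |∫ β, h β * k β| ≤ M * ∫ β in Ioo (-a) a, u β := by
  have hM : 0 ≤ M := (abs_nonneg _).trans (H.bd 0)
  have e : ∫ β, h β * k β = ∫ β in Ioo (-a) a, h β * k β := by
    rw [setIntegral_eq_integral_of_forall_compl_eq_zero]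
    intro x hx
    simp [H.supp x hx]
  rw [e, ← integral_const_mul]
  apply norm_integral_le_of_norm_le (f := fun β => h β * k β) (hu.const_mul M)
  refine (ae_restrict_iff' measurableSet_Ioo).2 (Eventually.of_forall (fun x hx => ?_))
  rw [norm_mul]
  exact mul_le_mul (H.bd x) (hb x hx) (norm_nonneg _) hM

lemma BH.integrable {h : ℝ → ℝ} {M a : ℝ} (H : BH h M a) : Integrable h := by
  have := H.int_bdd (k := fun _ => 1) (C := 1) measurable_const (by simp)
  simpa using this

/-- the function w -/
def wl (X t : ℝ) : ℝ := log (1 + X ^ 2 / t ^ 2) / 2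

lemma wl_nonneg (X t : ℝ) : 0 ≤ wl X t := by
  unfold wl
  have : 0 ≤ X ^ 2 / t ^ 2 := by positivity
  have := Real.log_nonneg (x := 1 + X ^ 2 / t ^ 2) (by linarith)
  linarith

lemma wl_even (X t : ℝ) : wl X (-t) = wl X t := by simp [wl]

lemma wl_meas (X : ℝ) : Measurable (wl X) := by unfold wl; fun_prop

lemma wl_eq {X t : ℝ} (hX : 0 < X) (ht : t ≠ 0) :
    wl X t = log (t ^ 2 + X ^ 2) / 2 - log t := by
  unfold wl
  have : 1 + X ^ 2 / t ^ 2 = (t ^ 2 + X ^ 2) / t ^ 2 := by field_simp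
  rw [this, Real.log_div (by positivity) (by positivity), Real.log_pow]
  push_cast; ring

lemma log_one_add_sq_le {u : ℝ} (hu : 0 ≤ u) : log (1 + u ^ 2) ≤ 2 * u := by
  have h1 : log (1 + u ^ 2) ≤ log ((1 + u) ^ 2) := by
    apply Real.log_le_log (by positivity); nlinarith
  rw [Real.log_pow] at h1
  have := Real.log_le_sub_one_of_pos (x := 1 + u) (by linarith)
  push_cast at h1
  linarith

lemma wl_half {X T : ℝ} (hX : 0 < X) (hT : 0 < T) :
    IntegrableOn (wl X) (Ioc 0 T) ∧ ∫ t in (0:ℝ)..T, wl X t ≤ 3 * X := by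
  -- antiderivative t * wl + X arctan (t/X)
  set P : ℝ → ℝ := fun t => t * wl X t + X * arctan (t / X) with hP
  have hd : ∀ t ∈ Ioo (0:ℝ) T, HasDerivAt P (wl X t) t := by
    intro t ht
    have ht0 : t ≠ 0 := ht.1.ne'
    have h1 : HasDerivAt (fun t : ℝ => 1 + X ^ 2 / t ^ 2) (-(X^2 * (2 * t)) / (t^2)^2) t := by
      have := ((hasDerivAt_const t (X^2)).div (hasDerivAt_pow 2 t) (by positivity)).const_add 1
      convert! this using 1; simp
    have h2 : HasDerivAt (wl X) ((-(X^2 * (2 * t)) / (t^2)^2) / (1 + X^2/t^2) / 2) t := by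
      have := (h1.log (by positivity)).div_const 2
      exact this
    have h3 : HasDerivAt (fun t : ℝ => arctan (t / X)) (1 / (1 + (t/X)^2) * (1 / X)) t := by
      exact ((hasDerivAt_id t).div_const X).arctan
    have h4 := ((hasDerivAt_id t).mul h2).add (h3.const_mul X)
    convert! h4 using 1
    simp only [id]
    field_simp
    ring
  have hc : ContinuousOn P (Icc 0 T) := by
    intro t ht
    rcases eq_or_lt_of_le ht.1 with h0 | h0
    · subst h0
      apply ContinuousAt.continuousWithinAt
      apply ContinuousAt.add
      · have : Tendsto (fun t => t * wl X t) (nhds 0) (nhds 0) := by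
          -- |t wl| ≤ |t| * sqrt ..., use  t * wl = t*log(t^2+X^2)/2 - t log t
          have e : (fun t => t * wl X t) = fun t => t * (log (t ^ 2 + X ^ 2) / 2) - t * log t := by
            funext s
            by_cases hs : s = 0
            · simp [hs]
            · rw [wl_eq hX hs]; ring
          rw [e]
          have c1 : Continuous (fun t : ℝ => t * (log (t ^ 2 + X ^ 2) / 2) - t * log t) := by
            apply Continuous.sub _ Real.continuous_mul_log
            apply Continuous.mul continuous_id
            apply Continuous.div_const
            apply Continuous.log (by fun_prop)
            intro s; positivity
          have := c1.tendsto 0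
          simpa using this
        unfold ContinuousAt
        simpa using this
      · exact (by fun_prop : Continuous (fun t : ℝ => X * arctan (t / X))).continuousAt
    · have h1 : ContinuousAt (wl X) t := by
        unfold wl
        apply ContinuousAt.div_const
        apply ContinuousAt.log
        · apply ContinuousAt.add continuousAt_const
          apply ContinuousAt.div continuousAt_const (by fun_prop) (by positivity)
        · positivity
      apply ContinuousAt.continuousWithinAt
      apply ContinuousAt.add
      · exact continuousAt_id.mul h1
      · exact (by fun_prop : Continuous (fun t : ℝ => X * arctan (t / X))).continuousAt
  have hi : IntegrableOn (wl X) (Ioc 0 T) :=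
    intervalIntegral.integrableOn_deriv_of_nonneg hc hd (fun t _ => wl_nonneg X t)
  refine ⟨hi, ?_⟩
  rw [intervalIntegral.integral_eq_sub_of_hasDerivAt_of_le hT.le hc hd
    ((intervalIntegrable_iff_integrableOn_Ioc_of_le hT.le).2 hi)]
  simp only [hP, zero_mul, zero_div, arctan_zero, mul_zero, add_zero, sub_zero]
  have a1 : arctan (T / X) ≤ 2 := by
    have := (arctan_lt_pi_div_two (T/X)).le
    have := Real.pi_le_four
    linarith
  have a2 : T * wl X T ≤ X := by
    unfold wl
    have := log_one_add_sq_le (u := X / T) (by positivity)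
    rw [div_pow] at this
    calc T * (log (1 + X^2/T^2)/2) ≤ T * (2 * (X/T) / 2) := by gcongr
      _ = X := by field_simp
  nlinarith

lemma wl_full {X : ℝ} (hX : 0 < X) :
    Integrable (wl X) ∧ ∫ t, wl X t ≤ 6 * X := by
  have hpos : ∀ T : ℝ, 0 < T → IntervalIntegrable (wl X) volume 0 T := fun T hT =>
    (intervalIntegrable_iff_integrableOn_Ioc_of_le hT.le).2 (wl_half hX hT).1
  have hneg : ∀ T : ℝ, 0 < T → IntervalIntegrable (wl X) volume (-T) 0 := fun T hT => by
    have := (IntervalIntegrable.iff_comp_neg (by simp)).1 (hpos T hT)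
    simp only [neg_zero] at this
    simp only [wl_even] at this
    exact this.symm
  have hval : ∀ T : ℝ, 0 < T → ∫ t in (-T)..T, wl X t ≤ 6 * X := fun T hT => by
    rw [← intervalIntegral.integral_add_adjacent_intervals (hneg T hT) (hpos T hT)]
    have : ∫ t in (-T)..0, wl X t = ∫ t in (0:ℝ)..T, wl X t := by
      have := intervalIntegral.integral_comp_neg (a := 0) (b := T) (wl X)
      simp only [neg_zero, wl_even] at this
      exact this.symm
    rw [this]
    have := (wl_half hX hT).2
    linarith
  have hint : Integrable (wl X) := by
    refine integrable_of_intervalIntegral_norm_bounded (l := atTop) (a := fun T : ℝ => -T)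
      (b := fun T : ℝ => T) (6 * X) ?_ tendsto_neg_atTop_atBot tendsto_id ?_
    · intro T
      rcases le_or_gt T 0 with h | h
      · rw [Ioc_eq_empty (by linarith)]; exact integrableOn_empty
      · exact (intervalIntegrable_iff_integrableOn_Ioc_of_le (by linarith)).1
          ((hneg T h).trans (hpos T h))
    · filter_upwards [eventually_gt_atTop 0] with T hT
      have : (fun t => ‖wl X t‖) = wl X := by
        funext t; rw [Real.norm_of_nonneg (wl_nonneg X t)]
      rw [this]; exact hval T hT
  refine ⟨hint, ?_⟩
  refine le_of_tendsto (intervalIntegral_tendsto_integral hint tendsto_neg_atTop_atBot tendsto_id) ?_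
  filter_upwards [eventually_gt_atTop 0] with T hT
  exact hval T hT

/-- logarithmic potential -/
def Lpot (h : ℝ → ℝ) (α : ℝ) : ℝ := ∫ β, h β * log (α - β)

/-- regularized potential -/
def Npot (h : ℝ → ℝ) (X α : ℝ) : ℝ := ∫ β, h β * (log ((α - β) ^ 2 + X ^ 2) / 2)

lemma BH.int_log {h : ℝ → ℝ} {M a : ℝ} (H : BH h M a) (α : ℝ) :
    Integrable (fun β => h β * log (α - β)) := by
  apply H.int_mul
  have h1 : IntervalIntegrable (fun β => log (α - β)) volume (-a) a := by
    have := (intervalIntegral.intervalIntegrable_log' (a := α + a) (b := α - a)).comp_sub_left α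
    simpa using this
  rcases le_or_gt (-a) a with h | h
  · exact ((intervalIntegrable_iff_integrableOn_Ioc_of_le h).1 h1).mono_set Ioo_subset_Ioc_self
  · rw [Ioo_eq_empty (by linarith)]; exact integrableOn_empty

lemma BH.int_logX {h : ℝ → ℝ} {M a : ℝ} (H : BH h M a) {X : ℝ} (hX : 0 < X) (α : ℝ) :
    Integrable (fun β => h β * (log ((α - β) ^ 2 + X ^ 2) / 2)) := by
  apply H.int_mul
  have : Continuous (fun β => log ((α - β) ^ 2 + X ^ 2) / 2) := by
    apply Continuous.div_const
    apply Continuous.log (by fun_prop)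
    intro s; positivity
  exact (this.continuousOn.integrableOn_Icc).mono_set Ioo_subset_Icc_self

lemma BH.L_sub_N {h : ℝ → ℝ} {M a : ℝ} (H : BH h M a) {X : ℝ} (hX : 0 < X) (α : ℝ) :
    |Lpot h α - Npot h X α| ≤ 6 * M * X := by
  have hM : 0 ≤ M := (abs_nonneg _).trans (H.bd 0)
  unfold Lpot Npot
  rw [← integral_sub (H.int_log α) (H.int_logX hX α)]
  have hi : Integrable (fun β => wl X (α - β)) := (wl_full hX).1.comp_sub_left α
  have e : ∫ β, wl X (α - β) = ∫ t, wl X t := integral_sub_left_eq_self _ _ α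
  have : |∫ β, (h β * log (α - β) - h β * (log ((α - β) ^ 2 + X ^ 2) / 2))|
      ≤ ∫ β, M * wl X (α - β) := by
    apply norm_integral_le_of_norm_le (f := fun β => (h β * log (α - β) - h β * (log ((α - β) ^ 2 + X ^ 2) / 2))) (hi.const_mul M)
    have : ∀ᵐ β : ℝ, β ≠ α := by
      simp [ae_iff]
    filter_upwards [this] with β hβ
    have := wl_eq hX (t := α - β) (sub_ne_zero.2 hβ.symm)
    rw [← mul_sub, norm_mul]
    have e2 : log (α - β) - log ((α - β) ^ 2 + X ^ 2) / 2 = - wl X (α - β) := by rw [this]; ring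
    rw [e2, norm_neg, Real.norm_of_nonneg (wl_nonneg _ _)]
    exact mul_le_mul_of_nonneg_right (H.bd β) (wl_nonneg _ _)
  refine this.trans ?_
  rw [integral_const_mul, e]
  have := (wl_full hX).2
  nlinarith

def Qp (h : ℝ → ℝ) (X α : ℝ) : ℝ := ∫ β, h β * ((α - β) / ((α - β) ^ 2 + X ^ 2))
def Rp (h : ℝ → ℝ) (X α : ℝ) : ℝ := ∫ β, h β * (1 / ((α - β) ^ 2 + X ^ 2))

lemma abs_q_le {X : ℝ} (hX : 0 < X) (t : ℝ) : |t / (t ^ 2 + X ^ 2)| ≤ 1 / X := by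
  rw [abs_div, abs_of_pos (show 0 < t ^ 2 + X ^ 2 by positivity),
    div_le_div_iff₀ (by positivity) hX]
  nlinarith [sq_nonneg (|t| - X), sq_abs t, sq_nonneg X, sq_nonneg t]

lemma abs_r_le {X : ℝ} (hX : 0 < X) (t : ℝ) : |1 / (t ^ 2 + X ^ 2)| ≤ 1 / X ^ 2 := by
  rw [abs_div, abs_one, abs_of_pos (show 0 < t ^ 2 + X ^ 2 by positivity)]
  apply one_div_le_one_div_of_le (by positivity)
  nlinarith [sq_nonneg t]

lemma BH.int_q {h : ℝ → ℝ} {M a : ℝ} (H : BH h M a) {X : ℝ} (hX : 0 < X) (α : ℝ) :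
    Integrable (fun β => h β * ((α - β) / ((α - β) ^ 2 + X ^ 2))) :=
  H.int_bdd (by fun_prop) (fun β _ => abs_q_le hX (α - β))

lemma BH.int_r {h : ℝ → ℝ} {M a : ℝ} (H : BH h M a) {X : ℝ} (hX : 0 < X) (α : ℝ) :
    Integrable (fun β => h β * (1 / ((α - β) ^ 2 + X ^ 2))) :=
  H.int_bdd (by fun_prop) (fun β _ => abs_r_le hX (α - β))

lemma BH.hasDeriv_N {h : ℝ → ℝ} {M a : ℝ} (H : BH h M a) {X X1 : ℝ → ℝ} {c K α₀ : ℝ} (hc : 0 < c)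
    {s : Set ℝ} (hs : s ∈ nhds α₀)
    (hX : ∀ x ∈ s, HasDerivAt X (X1 x) x ∧ c ≤ X x ∧ |X x * X1 x| ≤ K) :
    HasDerivAt (fun x => Npot h (X x) x)
      (Qp h (X α₀) α₀ + X α₀ * X1 α₀ * Rp h (X α₀) α₀) α₀ := by
  have hα := mem_of_mem_nhds hs
  have hX0 : 0 < X α₀ := hc.trans_le (hX _ hα).2.1
  have key := hasDerivAt_integral_of_dominated_loc_of_deriv_le (μ := volume) (𝕜 := ℝ) (s := s)
    (F := fun x β => h β * (log ((x - β) ^ 2 + X x ^ 2) / 2))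
    (F' := fun x β => h β * (((x - β) + X x * X1 x) / ((x - β) ^ 2 + X x ^ 2)))
    (x₀ := α₀) (bound := fun β => |h β| * (1 / c + K * (1 / c ^ 2))) hs ?_ (H.int_logX hX0 α₀) ?_ ?_ ?_ ?_
  · have e := key.2
    have e2 : (∫ β, h β * (((α₀ - β) + X α₀ * X1 α₀) / ((α₀ - β) ^ 2 + X α₀ ^ 2))) =
        Qp h (X α₀) α₀ + X α₀ * X1 α₀ * Rp h (X α₀) α₀ := by
      unfold Qp Rp
      rw [← integral_const_mul, ← integral_add (H.int_q hX0 α₀) ((H.int_r hX0 α₀).const_mul _)]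
      congr 1; funext β; ring
    rw [e2] at e
    exact e
  · filter_upwards [hs] with x hx
    exact (H.int_logX (hc.trans_le (hX _ hx).2.1) x).aestronglyMeasurable
  · have := H.meas
    exact (by fun_prop : Measurable (fun β => h β * (((α₀ - β) + X α₀ * X1 α₀) / ((α₀ - β) ^ 2 + X α₀ ^ 2)))).aestronglyMeasurable
  · refine Eventually.of_forall (fun β x hx => ?_)
    obtain ⟨_, h2, h3⟩ := hX x hx
    have hXx : 0 < X x := hc.trans_le h2
    have hK : 0 ≤ K := (abs_nonneg _).trans h3
    rw [norm_mul]
    apply mul_le_mul_of_nonneg_left _ (abs_nonneg _)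
    have : ((x - β) + X x * X1 x) / ((x - β) ^ 2 + X x ^ 2) =
      (x - β) / ((x - β) ^ 2 + X x ^ 2) + X x * X1 x * (1 / ((x - β) ^ 2 + X x ^ 2)) := by ring
    rw [this]
    refine (norm_add_le _ _).trans ?_
    apply add_le_add
    · exact (abs_q_le hXx _).trans (one_div_le_one_div_of_le hc h2)
    · rw [norm_mul]
      apply mul_le_mul h3 _ (abs_nonneg _) hK
      exact (abs_r_le hXx _).trans (one_div_le_one_div_of_le (by positivity) (by gcongr))
  · exact (H.integrable.abs).mul_const _
  · refine Eventually.of_forall (fun β x hx => ?_)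
    obtain ⟨h1, h2, h3⟩ := hX x hx
    have hXx : 0 < X x := hc.trans_le h2
    have d1 : HasDerivAt (fun x => (x - β) ^ 2 + X x ^ 2) (2 * (x - β) + 2 * X x * X1 x) x := by
      have := (((hasDerivAt_id x).sub_const β).pow 2).add (h1.pow 2)
      convert! this using 1
      simp
    have d2 := ((d1.log (by positivity)).div_const 2).const_mul (h β)
    convert! d2 using 1
    ring

lemma BH.hasDeriv_N_const {h : ℝ → ℝ} {M a : ℝ} (H : BH h M a) {y : ℝ} (hy : 0 < y) (α : ℝ) :
    HasDerivAt (fun x => Npot h y x) (Qp h y α) α := by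
  have := H.hasDeriv_N (X := fun _ => y) (X1 := fun _ => 0) (c := y) (K := 0) (α₀ := α) hy
    univ_mem (fun x _ => ⟨hasDerivAt_const x y, le_rfl, by simp⟩)
  simpa using this

/-- Cauchy transform -/
def Ch (h : ℝ → ℝ) (z : ℂ) : ℂ := ∫ β, (h β : ℂ) * (1 / (z - β))

lemma im_ne {z : ℂ} (hz : 0 < z.im) (β : ℝ) : z - β ≠ 0 := by
  intro h
  have := congrArg Complex.im h
  simp at this
  linarith

lemma norm_inv_le {z : ℂ} {r : ℝ} (hr : 0 < r) (hz : r ≤ z.im) (β : ℝ) : ‖1 / (z - β)‖ ≤ 1 / r := by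
  rw [norm_div, norm_one]
  apply one_div_le_one_div_of_le hr
  refine hz.trans ?_
  have := Complex.abs_im_le_norm (z - β)
  simp at this
  exact (le_abs_self _).trans this

lemma BH.int_Ch {h : ℝ → ℝ} {M a : ℝ} (H : BH h M a) {z : ℂ} (hz : 0 < z.im) :
    Integrable (fun β : ℝ => (h β : ℂ) * (1 / (z - β))) := by
  apply Integrable.mul_bdd (c := 1 / z.im) H.integrable.ofReal
  · exact (by fun_prop : Measurable (fun β : ℝ => 1 / (z - (β : ℂ)))).aestronglyMeasurable
  · exact Eventually.of_forall (fun β => norm_inv_le hz le_rfl β)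

lemma BH.diff_Ch {h : ℝ → ℝ} {M a : ℝ} (H : BH h M a) {z : ℂ} (hz : 0 < z.im) :
    DifferentiableAt ℂ (Ch h) z := by
  have hs : {w : ℂ | z.im / 2 < w.im} ∈ nhds z :=
    (isOpen_lt continuous_const Complex.continuous_im).mem_nhds (by simp; linarith)
  have key := hasDerivAt_integral_of_dominated_loc_of_deriv_le (μ := volume) (𝕜 := ℂ)
    (s := {w : ℂ | z.im / 2 < w.im})
    (F := fun w (β : ℝ) => (h β : ℂ) * (1 / (w - β)))
    (F' := fun w (β : ℝ) => (h β : ℂ) * (-(1 / (w - β)) ^ 2))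
    (x₀ := z) (bound := fun β => |h β| * (1 / (z.im / 2)) ^ 2) hs ?_ (H.int_Ch hz) ?_ ?_ ?_ ?_
  · exact key.2.differentiableAt
  · filter_upwards [hs] with x hx
    exact (H.int_Ch (lt_trans (by linarith) hx)).aestronglyMeasurable
  · have := H.meas
    exact (by fun_prop : Measurable (fun β : ℝ => (h β : ℂ) * (-(1 / (z - β)) ^ 2))).aestronglyMeasurable
  · refine Eventually.of_forall (fun β x hx => ?_)
    rw [norm_mul, Complex.norm_real, norm_neg, norm_pow]
    have := norm_inv_le (show 0 < z.im / 2 by linarith) (le_of_lt hx) β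
    apply mul_le_mul_of_nonneg_left _ (abs_nonneg _)
    gcongr
  · exact (H.integrable.abs).mul_const _
  · refine Eventually.of_forall (fun β x hx => ?_)
    have hx' : 0 < x.im := lt_trans (by linarith) hx
    have d1 : HasDerivAt (fun w : ℂ => 1 / (w - β)) (-(1 / (x - β)) ^ 2) x := by
      have := ((hasDerivAt_id x).sub_const (β : ℂ)).inv (im_ne hx' β)
      simp only [one_div]
      convert! this using 1
      simp [inv_pow, neg_div]
    exact d1.const_mul _

lemma BH.norm_Ch_le {h : ℝ → ℝ} {M a : ℝ} (H : BH h M a) (ha : 0 < a) {z : ℂ}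
    (hb : ∀ β ∈ Ioo (-a) a, a ≤ ‖z - (β:ℂ)‖) : ‖Ch h z‖ ≤ 2 * M := by
  have hM : 0 ≤ M := (abs_nonneg _).trans (H.bd 0)
  unfold Ch
  have e : ∫ β : ℝ, (h β : ℂ) * (1 / (z - β)) = ∫ β in Ioo (-a) a, (h β : ℂ) * (1 / (z - β)) := by
    rw [setIntegral_eq_integral_of_forall_compl_eq_zero]
    intro x hx
    simp [H.supp x hx]
  rw [e]
  have := norm_setIntegral_le_of_norm_le_const (μ := volume) (s := Ioo (-a) a) (C := M * (1 / a))
    (f := fun β : ℝ => (h β : ℂ) * (1 / (z - β))) (by simp) ?_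
  · refine this.trans ?_
    simp only [Real.volume_real_Ioo_of_le (show -a ≤ a by linarith)]
    apply le_of_eq; field_simp; ring
  · intro β hβ
    rw [norm_mul, Complex.norm_real, norm_div, norm_one]
    apply mul_le_mul (H.bd β) _ (by positivity) hM
    exact one_div_le_one_div_of_le ha (hb β hβ)

def Pp (h : ℝ → ℝ) (X α : ℝ) : ℝ := ∫ β, h β * (X / ((α - β) ^ 2 + X ^ 2))

lemma inv_reim (t y : ℝ) : 1 / ((t : ℂ) + y * Complex.I) =
    ((t / (t ^ 2 + y ^ 2) : ℝ) : ℂ) - ((y / (t ^ 2 + y ^ 2) : ℝ) : ℂ) * Complex.I := by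
  have : ∀ p q : ℝ, (1 / ((t : ℂ) + y * Complex.I)).re = p → (1 / ((t : ℂ) + y * Complex.I)).im = -q →
      1 / ((t : ℂ) + y * Complex.I) = (p : ℂ) - (q : ℂ) * Complex.I := by
    intro p q h1 h2
    apply Complex.ext
    · rw [h1]; simp
    · rw [h2]; simp
  apply this
  · simp [Complex.inv_re, Complex.normSq_apply]; ring
  · simp [Complex.inv_im, Complex.normSq_apply]; ring

lemma BH.Ch_eq {h : ℝ → ℝ} {M a : ℝ} (H : BH h M a) {y : ℝ} (hy : 0 < y) (x : ℝ) :
    Ch h (x + y * Complex.I) = (Qp h y x : ℂ) - (Pp h y x : ℂ) * Complex.I := by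
  unfold Ch Qp Pp
  have i2 : Integrable (fun β => h β * (y / ((x - β) ^ 2 + y ^ 2))) := by
    have := (H.int_r hy x).const_mul y
    convert! this using 2; ring
  rw [← integral_complex_ofReal, ← integral_complex_ofReal, ← integral_mul_const,
    ← integral_sub (H.int_q hy x).ofReal (i2.ofReal.mul_const _)]
  congr 1; funext β
  have := inv_reim (x - β) y
  have e : (x : ℂ) + y * Complex.I - β = ((x - β : ℝ) : ℂ) + y * Complex.I := by push_cast; ring
  rw [e, this]
  push_cast; ring

lemma poisson_int {X : ℝ} (hX : 0 < X) :
    Integrable (fun t : ℝ => X / (t ^ 2 + X ^ 2)) ∧ ∫ t : ℝ, X / (t ^ 2 + X ^ 2) = π := by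
  have e : (fun t : ℝ => X / (t ^ 2 + X ^ 2)) = fun t => X⁻¹ * (1 + (t / X) ^ 2)⁻¹ := by
    funext t; field_simp; ring
  rw [e]
  constructor
  · exact (integrable_inv_one_add_sq.comp_div hX.ne').const_mul _
  · rw [integral_const_mul, Measure.integral_comp_div (fun t => (1 + t ^ 2)⁻¹) X,
      integral_univ_inv_one_add_sq, abs_of_pos hX, smul_eq_mul]
    field_simp

lemma BH.P_le {h : ℝ → ℝ} {M a : ℝ} (H : BH h M a) {y : ℝ} (hy : 0 < y) (x : ℝ) :
    |Pp h y x| ≤ 4 * M := by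
  have hM : 0 ≤ M := (abs_nonneg _).trans (H.bd 0)
  unfold Pp
  have i := (poisson_int hy).1.comp_sub_left x
  have e : ∫ β, y / ((x - β) ^ 2 + y ^ 2) = π := by
    rw [← (poisson_int hy).2]; exact integral_sub_left_eq_self (fun t => y / (t ^ 2 + y ^ 2)) _ x
  have := norm_integral_le_of_norm_le (f := fun β => h β * (y / ((x - β) ^ 2 + y ^ 2)))
    (i.const_mul M) (Eventually.of_forall (fun β => ?_))
  · refine this.trans ?_
    rw [integral_const_mul, e]
    nlinarith [Real.pi_le_four]
  · rw [norm_mul, Real.norm_of_nonneg (show 0 ≤ y / ((x - β) ^ 2 + y ^ 2) by positivity)]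
    exact mul_le_mul_of_nonneg_right (H.bd β) (by positivity)

lemma BH.cont_Ch {h : ℝ → ℝ} {M a : ℝ} (H : BH h M a) {y : ℝ} (hy : 0 < y) :
    Continuous (fun x : ℝ => Ch h (x + y * Complex.I)) := by
  rw [continuous_iff_continuousAt]
  intro x
  have h1 : ContinuousAt (Ch h) (x + y * Complex.I) := (H.diff_Ch (by simpa using hy)).continuousAt
  exact ContinuousAt.comp (f := fun x : ℝ => (x : ℂ) + y * Complex.I) h1 (by fun_prop)

lemma BH.cont_Q {h : ℝ → ℝ} {M a : ℝ} (H : BH h M a) {y : ℝ} (hy : 0 < y) :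
    Continuous (Qp h y) := by
  have : Qp h y = fun x : ℝ => (Ch h (x + y * Complex.I)).re := by
    funext x; rw [H.Ch_eq hy x]; simp
  rw [this]
  exact Complex.continuous_re.comp (H.cont_Ch hy)

lemma BH.cont_P {h : ℝ → ℝ} {M a : ℝ} (H : BH h M a) {y : ℝ} (hy : 0 < y) :
    Continuous (Pp h y) := by
  have : Pp h y = fun x : ℝ => -(Ch h (x + y * Complex.I)).im := by
    funext x; rw [H.Ch_eq hy x]; simp
  rw [this]
  exact (Complex.continuous_im.comp (H.cont_Ch hy)).neg

lemma BH.rect {h : ℝ → ℝ} {M a : ℝ} (H : BH h M a) (ha : 0 < a) {y : ℝ} (hy : 0 < y) :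
    ‖∫ x in (-(2 * a))..(2 * a), (Ch h (x + y * Complex.I)) ^ 2‖ ≤ 40 * M ^ 2 * a := by
  have hM : 0 ≤ M := (abs_nonneg _).trans (H.bd 0)
  set z : ℂ := ⟨-(2 * a), y⟩ with hz
  set w : ℂ := ⟨2 * a, y + a⟩ with hw
  have key := Complex.integral_boundary_rect_eq_zero_of_differentiableOn (fun z => Ch h z ^ 2) z w ?_
  · have b1 : ‖∫ x : ℝ in z.re..w.re, Ch h (x + w.im * Complex.I) ^ 2‖ ≤ (2 * M) ^ 2 * |w.re - z.re| := by
      apply intervalIntegral.norm_integral_le_of_norm_le_const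
      intro x _
      rw [norm_pow]
      have := H.norm_Ch_le ha (z := x + w.im * Complex.I) (fun β _ => by
        refine le_trans ?_ (Complex.abs_im_le_norm _)
        simp [hw]
        rw [abs_of_pos (by linarith)]; linarith)
      gcongr
    have b2 : ‖∫ x : ℝ in z.im..w.im, Ch h (w.re + x * Complex.I) ^ 2‖ ≤ (2 * M) ^ 2 * |w.im - z.im| := by
      apply intervalIntegral.norm_integral_le_of_norm_le_const
      intro x _
      rw [norm_pow]
      have := H.norm_Ch_le ha (z := w.re + x * Complex.I) (fun β hβ => by
        refine le_trans ?_ (Complex.abs_re_le_norm _)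
        simp [hw]
        have := hβ.2
        rw [abs_of_pos (by linarith)]; linarith)
      gcongr
    have b3 : ‖∫ x : ℝ in z.im..w.im, Ch h (z.re + x * Complex.I) ^ 2‖ ≤ (2 * M) ^ 2 * |w.im - z.im| := by
      apply intervalIntegral.norm_integral_le_of_norm_le_const
      intro x _
      rw [norm_pow]
      have := H.norm_Ch_le ha (z := z.re + x * Complex.I) (fun β hβ => by
        refine le_trans ?_ (Complex.abs_re_le_norm _)
        simp [hz]
        have := hβ.1
        rw [abs_of_neg (by linarith)]; linarith)
      gcongr
    have e1 : |w.re - z.re| = 4 * a := by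
      simp only [hw, hz]; rw [abs_of_pos] <;> linarith
    have e2 : |w.im - z.im| = a := by
      simp only [hw, hz]; rw [abs_of_pos] <;> linarith
    rw [e1] at b1; rw [e2] at b2 b3
    have e3 : ∫ x in (-(2 * a))..(2 * a), (Ch h (x + y * Complex.I)) ^ 2 =
      (∫ x : ℝ in z.re..w.re, Ch h (x + w.im * Complex.I) ^ 2)
      - Complex.I • (∫ x : ℝ in z.im..w.im, Ch h (w.re + x * Complex.I) ^ 2)
      + Complex.I • (∫ x : ℝ in z.im..w.im, Ch h (z.re + x * Complex.I) ^ 2) := by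
      have : ∫ x in (-(2 * a))..(2 * a), (Ch h (x + y * Complex.I)) ^ 2 =
        ∫ x : ℝ in z.re..w.re, Ch h (x + z.im * Complex.I) ^ 2 := rfl
      rw [this]
      linear_combination key
    rw [e3]
    refine (norm_add_le _ _).trans ?_
    have := norm_sub_le (∫ x : ℝ in z.re..w.re, Ch h (x + w.im * Complex.I) ^ 2)
      (Complex.I • (∫ x : ℝ in z.im..w.im, Ch h (w.re + x * Complex.I) ^ 2))
    rw [norm_smul, Complex.norm_I, one_mul] at this ⊢
    have : 0 ≤ M ^ 2 * a := by positivity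
    nlinarith
  · intro u hu
    have : 0 < u.im := by
      have := hu.2
      simp only [hz, hw, mem_preimage] at this
      rw [uIcc_of_le (by linarith)] at this
      exact hy.trans_le this.1
    exact ((H.diff_Ch this).pow 2).differentiableWithinAt

lemma BH.Q_sq {h : ℝ → ℝ} {M a : ℝ} (H : BH h M a) (ha : 0 < a) {y : ℝ} (hy : 0 < y) :
    ∫ x in (-(2 * a))..(2 * a), (Qp h y x) ^ 2 ≤ 104 * M ^ 2 * a := by
  have hQ := H.cont_Q hy
  have hP := H.cont_P hy
  have hQ2 : Continuous (fun x => Qp h y x ^ 2) := hQ.pow 2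
  have hP2 : Continuous (fun x => Pp h y x ^ 2) := hP.pow 2
  have hC2 : Continuous (fun x : ℝ => Ch h (x + y * Complex.I) ^ 2) := (H.cont_Ch hy).pow 2
  have e : (∫ x in (-(2 * a))..(2 * a), (Ch h (x + y * Complex.I)) ^ 2).re =
      ∫ x in (-(2 * a))..(2 * a), ((Qp h y x) ^ 2 - (Pp h y x) ^ 2) := by
    have := Complex.reCLM.intervalIntegral_comp_comm (μ := volume) (a := -(2*a)) (b := 2*a)
      (hC2.intervalIntegrable _ _)
    simp only [Complex.reCLM_apply] at this
    rw [← this]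
    congr 1; funext x
    rw [H.Ch_eq hy x]
    simp [pow_two]
  have h1 := (Complex.abs_re_le_norm _).trans (H.rect ha hy)
  rw [e, intervalIntegral.integral_sub (hQ2.intervalIntegrable _ _) (hP2.intervalIntegrable _ _)] at h1
  have h2 : ∫ x in (-(2 * a))..(2 * a), (Pp h y x) ^ 2 ≤ ∫ x in (-(2 * a))..(2 * a), 16 * M ^ 2 := by
    apply intervalIntegral.integral_mono_on (by linarith) (hP2.intervalIntegrable _ _) (by simp)
    intro x _
    have := H.P_le hy x
    nlinarith [abs_nonneg (Pp h y x), sq_abs (Pp h y x)]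
  rw [intervalIntegral.integral_const, smul_eq_mul] at h2
  have := le_abs_self ((∫ x in (-(2 * a))..(2 * a), (Qp h y x) ^ 2) - ∫ x in (-(2 * a))..(2 * a), (Pp h y x) ^ 2)
  nlinarith

lemma BH.L_AC {h : ℝ → ℝ} {M a : ℝ} (H : BH h M a) (ha : 0 < a) :
    AbsolutelyContinuousOnInterval (Lpot h) (-(2 * a)) (2 * a) := by
  have hM : 0 ≤ M := (abs_nonneg _).trans (H.bd 0)
  rw [absolutelyContinuousOnInterval_iff]
  intro e he
  set C : ℝ := 104 * M ^ 2 * a + 1 with hC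
  have hCpos : 0 < C := by positivity
  set η : ℝ := e / (4 * C) with hη
  have hηpos : 0 < η := by positivity
  refine ⟨e * η, by positivity, ?_⟩
  intro E hE hlen
  obtain ⟨n, I⟩ := E
  simp only at hlen ⊢
  -- choose y
  obtain ⟨y, hy⟩ : ∃ y : ℝ, y = e / (4 * (12 * (M + 1) * (n + 1))) := ⟨_, rfl⟩
  have hypos : 0 < y := by rw [hy]; positivity
  have hQ := H.cont_Q hypos
  have hQ2 : Continuous (fun x => Qp h y x ^ 2) := hQ.pow 2
  have step : ∀ i ∈ Finset.range n, dist (Lpot h (I i).1) (Lpot h (I i).2) ≤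
      12 * M * y + (η * ∫ x in uIoc (I i).1 (I i).2, Qp h y x ^ 2) + dist (I i).1 (I i).2 / (4 * η) := by
    intro i _
    have h1 := H.L_sub_N hypos (I i).1
    have h2 := H.L_sub_N hypos (I i).2
    have h3 : |Npot h y (I i).2 - Npot h y (I i).1| ≤
        (η * ∫ x in uIoc (I i).1 (I i).2, Qp h y x ^ 2) + dist (I i).1 (I i).2 / (4 * η) := by
      rw [← intervalIntegral.integral_eq_sub_of_hasDerivAt (f := Npot h y) (f' := Qp h y)
        (fun x _ => H.hasDeriv_N_const hypos x) (hQ.intervalIntegrable _ _)]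
      refine (intervalIntegral.norm_integral_le_integral_norm_uIoc (f := Qp h y)).trans ?_
      have i1 : IntegrableOn (fun x => Qp h y x ^ 2) (uIoc (I i).1 (I i).2) :=
        (intervalIntegrable_iff.1 (hQ2.intervalIntegrable _ _))
      have i2 : IntegrableOn (fun x => (1 / (4 * η) : ℝ)) (uIoc (I i).1 (I i).2) :=
        (intervalIntegrable_iff.1 (continuous_const.intervalIntegrable _ _))
      have i3 : IntegrableOn (fun x => ‖Qp h y x‖) (uIoc (I i).1 (I i).2) :=
        (intervalIntegrable_iff.1 (hQ.norm.intervalIntegrable _ _))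
      have : ∫ x in uIoc (I i).1 (I i).2, ‖Qp h y x‖ ≤
          ∫ x in uIoc (I i).1 (I i).2, (η * Qp h y x ^ 2 + 1 / (4 * η)) := by
        apply integral_mono i3 ((i1.const_mul η).add i2)
        intro x
        change |Qp h y x| ≤ η * Qp h y x ^ 2 + 1 / (4 * η)
        rw [← sq_abs (Qp h y x)]
        have : η * |Qp h y x| ^ 2 + 1 / (4 * η) - |Qp h y x| = (2 * η * |Qp h y x| - 1) ^ 2 / (4 * η) := by
          field_simp; ring
        have : 0 ≤ (2 * η * |Qp h y x| - 1) ^ 2 / (4 * η) := by positivity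
        linarith
      refine this.trans (le_of_eq ?_)
      rw [integral_add (i1.const_mul η) i2, integral_const_mul, setIntegral_const, smul_eq_mul]
      congr 1
      rw [uIoc, Real.volume_real_Ioc_of_le min_le_max, max_sub_min_eq_abs, Real.dist_eq, abs_sub_comm]
      field_simp
    rw [Real.dist_eq]
    have : Lpot h (I i).1 - Lpot h (I i).2 = (Lpot h (I i).1 - Npot h y (I i).1) -
      (Lpot h (I i).2 - Npot h y (I i).2) - (Npot h y (I i).2 - Npot h y (I i).1) := by ring
    rw [this]
    have t1 := abs_sub ((Lpot h (I i).1 - Npot h y (I i).1) - (Lpot h (I i).2 - Npot h y (I i).2)) (Npot h y (I i).2 - Npot h y (I i).1)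
    have t2 := abs_sub (Lpot h (I i).1 - Npot h y (I i).1) (Lpot h (I i).2 - Npot h y (I i).2)
    linarith
  have hsum := Finset.sum_le_sum step
  rw [Finset.sum_add_distrib, Finset.sum_add_distrib, ← Finset.mul_sum, ← Finset.sum_div,
    Finset.sum_const, Finset.card_range, nsmul_eq_mul] at hsum
  have hQs : ∑ i ∈ Finset.range n, ∫ x in uIoc (I i).1 (I i).2, Qp h y x ^ 2 ≤ C := by
    rw [← integral_biUnion_finset (Finset.range n) (fun i _ => measurableSet_uIoc) hE.2
      (fun i _ => (intervalIntegrable_iff.1 (hQ2.intervalIntegrable _ _)))]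
    have h1 := H.Q_sq ha hypos
    rw [intervalIntegral.integral_of_le (by linarith), ← uIoc_of_le (by linarith)] at h1
    have h2 : ∫ x in ⋃ i ∈ Finset.range n, uIoc (I i).1 (I i).2, Qp h y x ^ 2 ≤
        ∫ x in uIoc (-(2 * a)) (2 * a), Qp h y x ^ 2 := by
      apply setIntegral_mono_set (intervalIntegrable_iff.1 (hQ2.intervalIntegrable _ _))
      · exact Eventually.of_forall (fun x => sq_nonneg _)
      · exact (AbsolutelyContinuousOnInterval.biUnion_uIoc_subset_of_mem_disjWithin hE).eventuallyLE
    linarith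
  have f1 : (n : ℝ) * (12 * M * y) ≤ e / 4 := by
    have : e / 4 = (n + 1) * (12 * (M + 1) * y) := by rw [hy]; field_simp
    rw [this]
    have : (n : ℝ) ≤ n + 1 := by linarith
    gcongr
    linarith
  have f2 : η * ∑ i ∈ Finset.range n, ∫ x in uIoc (I i).1 (I i).2, Qp h y x ^ 2 ≤ e / 4 := by
    have : e / 4 = η * C := by rw [hη]; field_simp
    rw [this]; gcongr
  have f3 : (∑ i ∈ Finset.range n, dist (I i).1 (I i).2) / (4 * η) ≤ e / 4 := by
    have : e / 4 = e * η / (4 * η) := by field_simp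
    rw [this]; gcongr
  rw [Finset.mul_sum] at f2
  linarith

/-- the comparison kernel -/
def kk (u : ℝ) : ℝ := (if 1 < |u| then 1 / u else 0) - (log (u + 1) - log (u - 1)) / 2

lemma kk_odd (u : ℝ) : kk (-u) = - kk u := by
  unfold kk
  have h1 : log (-u + 1) = log (u - 1) := by rw [← Real.log_neg_eq_log]; congr 1; ring
  have h2 : log (-u - 1) = log (u + 1) := by rw [← Real.log_neg_eq_log]; congr 1; ring
  rw [h1, h2, abs_neg]
  split_ifs <;> ring

lemma kk_meas : Measurable kk := by
  unfold kk
  apply Measurable.sub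
  · exact Measurable.ite (measurableSet_lt measurable_const (by fun_prop)) (by fun_prop) measurable_const
  · fun_prop

lemma kk_bound {u : ℝ} (hu : 2 < |u|) : |kk u| ≤ 4 * (1 + u ^ 2)⁻¹ := by
  have hu0 : u ≠ 0 := by rintro rfl; simp at hu; linarith
  have hv : |1 / u| < 1 / 2 := by
    rw [abs_div, abs_one]; exact one_div_lt_one_div_of_lt (by norm_num) hu
  set v := 1 / u with hvd
  have huv : u = 1 / v := by rw [hvd]; field_simp
  have hv0 : v ≠ 0 := by rw [hvd]; positivity
  have k1 := Real.abs_log_sub_add_sum_range_le (x := v) (by linarith) 1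
  have k2 := Real.abs_log_sub_add_sum_range_le (x := -v) (by rw [abs_neg]; linarith) 1
  simp only [Finset.sum_range_one, zero_add, pow_one, abs_neg, sub_neg_eq_add] at k1 k2
  norm_num at k1 k2
  have hb : v ^ 2 / (1 - |v|) ≤ 2 * v ^ 2 := by
    rw [div_le_iff₀ (by linarith)]
    nlinarith [sq_nonneg v]
  have hv1 := abs_lt.1 hv
  have e : kk u = v - (log (1 + v) - log (1 - v)) / 2 := by
    unfold kk
    rw [if_pos (by linarith)]
    have l1 : log (u + 1) = log (1 + v) - log v := by
      rw [← Real.log_div (by linarith) hv0]; congr 1; rw [huv]; field_simp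
    have l2 : log (u - 1) = log (1 - v) - log v := by
      rw [← Real.log_div (by linarith) hv0]; congr 1; rw [huv]; field_simp
    rw [l1, l2]; ring
  have : |kk u| ≤ 2 * v ^ 2 := by
    rw [e, abs_le]
    have := abs_le.1 (k1.trans hb)
    have := abs_le.1 (k2.trans hb)
    constructor <;> linarith
  refine this.trans ?_
  have hu2 : 1 ≤ u ^ 2 := by rw [← sq_abs]; nlinarith
  rw [hvd, ← div_eq_mul_inv, div_pow, one_pow, mul_one_div, div_le_div_iff₀ (by positivity) (by positivity)]
  nlinarith

lemma kk_int : Integrable kk := by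
  rw [← integrableOn_univ, ← union_compl_self (Icc (-2:ℝ) 2)]
  apply IntegrableOn.union
  · unfold kk
    apply Integrable.sub
    · apply Measure.integrableOn_of_bounded (M := 1) (by simp)
      · exact (Measurable.ite (measurableSet_lt measurable_const (by fun_prop)) (by fun_prop) measurable_const).aestronglyMeasurable
      · refine Eventually.of_forall (fun u => ?_)
        split_ifs with h
        · rw [norm_div, norm_one, Real.norm_eq_abs, div_le_one (by linarith)]; exact h.le
        · simp
    · apply Integrable.div_const
      apply Integrable.sub
      · have := (intervalIntegral.intervalIntegrable_log' (a := -1) (b := 3)).comp_add_right 1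
        norm_num at this
        exact (intervalIntegrable_iff_integrableOn_Icc_of_le (by norm_num)).1 this
      · have := (intervalIntegral.intervalIntegrable_log' (a := -3) (b := 1)).comp_sub_right 1
        norm_num at this
        exact (intervalIntegrable_iff_integrableOn_Icc_of_le (by norm_num)).1 this
  · have : IntegrableOn (fun u : ℝ => 4 * (1 + u ^ 2)⁻¹) (Icc (-2:ℝ) 2)ᶜ :=
      (integrable_inv_one_add_sq.const_mul 4).integrableOn
    apply Integrable.mono' this kk_meas.aestronglyMeasurable
    refine (ae_restrict_iff' measurableSet_Icc.compl).2 (Eventually.of_forall (fun u hu => ?_))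
    apply kk_bound
    by_contra hc
    exact hu (abs_le.1 (not_lt.1 hc))

lemma kk_zero : ∫ u, kk u = 0 := by
  have h1 : ∫ u, kk (-u) = ∫ u, kk u := integral_neg_eq_self kk volume
  simp only [kk_odd, integral_neg] at h1
  linarith

lemma leb_lemma {h k : ℝ → ℝ} {M α : ℝ} (hm : Measurable h) (hb : ∀ x, |h x| ≤ M)
    (hk : Integrable k)
    (hl : ∀ N : ℝ, 0 < N → Tendsto (fun r : ℝ => ⨍ y in Metric.closedBall α (N * r), ‖h y - h α‖)
      (nhdsWithin 0 (Ioi 0)) (nhds 0)) :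
    Tendsto (fun r : ℝ => ∫ u, (h (α - r * u) - h α) * k u) (nhdsWithin 0 (Ioi 0)) (nhds 0) := by
  have hM : 0 ≤ M := (abs_nonneg _).trans (hb 0)
  rw [Metric.tendsto_nhds]
  intro e he
  obtain ⟨k', hk'c, hk'i, hk'cont, hk'int⟩ := hk.exists_hasCompactSupport_integral_sub_le
    (ε := e / (4 * (M + 1))) (by positivity)
  obtain ⟨N0, hN0⟩ := hk'c.isCompact.isBounded.subset_closedBall 0
  obtain ⟨B, hB⟩ := hk'c.exists_bound_of_continuous hk'cont
  have hB0 : 0 ≤ B := (norm_nonneg _).trans (hB 0)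
  set N : ℝ := |N0| + 1 with hN
  have hNpos : 0 < N := by positivity
  have hsupp : ∀ u, u ∉ Ioc (-N) N → k' u = 0 := by
    intro u hu
    by_contra hc
    have := hN0 (subset_tsupport _ hc)
    rw [Metric.mem_closedBall, dist_zero_right, Real.norm_eq_abs] at this
    have h2 := le_abs_self N0
    apply hu
    have := abs_le.1 this
    constructor <;> linarith
  have h1 := (Metric.tendsto_nhds.1 (hl N hNpos)) (e / (4 * (B + 1) * N)) (by positivity)
  filter_upwards [h1, self_mem_nhdsWithin] with r hr hrpos
  have hrpos : 0 < r := hrpos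
  rw [dist_zero_right, Real.norm_eq_abs] at hr ⊢
  have mr : Measurable (fun u => h (α - r * u) - h α) := by fun_prop
  have bdr : ∀ u, ‖h (α - r * u) - h α‖ ≤ 2 * M := fun u => by
    refine (norm_sub_le _ _).trans ?_
    have := hb (α - r * u); have := hb α
    simp only [Real.norm_eq_abs]; linarith
  have i1 : Integrable (fun u => (h (α - r * u) - h α) * (k u - k' u)) :=
    (hk.sub hk'int).bdd_mul mr.aestronglyMeasurable (Eventually.of_forall bdr)
  have i2 : Integrable (fun u => (h (α - r * u) - h α) * k' u) :=
    hk'int.bdd_mul mr.aestronglyMeasurable (Eventually.of_forall bdr)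
  have split : ∫ u, (h (α - r * u) - h α) * k u =
      (∫ u, (h (α - r * u) - h α) * (k u - k' u)) + ∫ u, (h (α - r * u) - h α) * k' u := by
    rw [← integral_add i1 i2]; congr 1; funext u; ring
  have b1 : |∫ u, (h (α - r * u) - h α) * (k u - k' u)| ≤ e / 2 := by
    have := norm_integral_le_of_norm_le (f := fun u => (h (α - r * u) - h α) * (k u - k' u))
      (g := fun u => 2 * M * ‖k u - k' u‖) ((hk.sub hk'int).norm.const_mul _)
      (Eventually.of_forall (fun u => by
        rw [norm_mul]; exact mul_le_mul_of_nonneg_right (bdr u) (norm_nonneg _)))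
    refine this.trans ?_
    rw [integral_const_mul]
    calc 2 * M * ∫ u, ‖k u - k' u‖ ≤ 2 * (M + 1) * (e / (4 * (M + 1))) := by
          gcongr
          linarith
      _ = e / 2 := by field_simp; ring
  have b2 : |∫ u, (h (α - r * u) - h α) * k' u| < e / 2 := by
    have e1 : ∫ u, (h (α - r * u) - h α) * k' u = ∫ u in (-N)..N, (h (α - r * u) - h α) * k' u := by
      rw [intervalIntegral.integral_of_le (by linarith), setIntegral_eq_integral_of_forall_compl_eq_zero]
      intro u hu; rw [hsupp u hu, mul_zero]
    rw [e1]
    have ig : ∀ a b : ℝ, IntervalIntegrable (fun y => ‖h y - h α‖) volume a b := fun a b => by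
      rw [intervalIntegrable_iff]
      apply Measure.integrableOn_of_bounded (M := 2 * M)
      · rw [uIoc]; simp
      · exact (by fun_prop : Measurable (fun y => ‖h y - h α‖)).aestronglyMeasurable
      · refine Eventually.of_forall (fun u => ?_)
        rw [norm_norm]
        refine (norm_sub_le _ _).trans ?_
        have := hb u; have := hb α
        simp only [Real.norm_eq_abs]; linarith
    have ig2 : IntervalIntegrable (fun u => B * ‖h (α - r * u) - h α‖) volume (-N) N := by
      rw [intervalIntegrable_iff]
      apply Measure.integrableOn_of_bounded (M := B * (2 * M))
      · rw [uIoc]; simp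
      · exact (by fun_prop : Measurable (fun y => B * ‖h (α - r * y) - h α‖)).aestronglyMeasurable
      · refine Eventually.of_forall (fun u => ?_)
        rw [norm_mul, norm_norm, Real.norm_of_nonneg hB0]
        exact mul_le_mul_of_nonneg_left (bdr u) hB0
    have := intervalIntegral.norm_integral_le_of_norm_le (a := -N) (b := N) (μ := volume)
      (f := fun u => (h (α - r * u) - h α) * k' u) (g := fun u => B * ‖h (α - r * u) - h α‖)
      (by linarith) (Eventually.of_forall (fun u _ => by
        rw [norm_mul, mul_comm]; exact mul_le_mul_of_nonneg_right (hB u) (norm_nonneg _))) ig2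
    refine lt_of_le_of_lt this ?_
    rw [intervalIntegral.integral_const_mul,
      intervalIntegral.integral_comp_sub_mul (fun y => ‖h y - h α‖) hrpos.ne' α]
    have e2 : ∫ y in (α - r * N)..(α - r * (-N)), ‖h y - h α‖ =
        2 * N * r * ⨍ y in Metric.closedBall α (N * r), ‖h y - h α‖ := by
      rw [setAverage_eq, Real.closedBall_eq_Icc, Real.volume_real_Icc_of_le (by nlinarith),
        intervalIntegral.integral_of_le (by nlinarith), integral_Icc_eq_integral_Ioc, smul_eq_mul]
      have q1 : α - r * N = α - N * r := by ring
      have q2 : α - r * (-N) = α + N * r := by ring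
      rw [q1, q2]
      field_simp
      ring
    rw [e2, smul_eq_mul]
    have hr' := (le_abs_self _).trans_lt hr
    set Av := ⨍ y in Metric.closedBall α (N * r), ‖h y - h α‖ with hAv
    have : B * (r⁻¹ * (2 * N * r * Av)) = 2 * N * B * Av := by field_simp
    rw [this]
    have hAv0 : 0 ≤ Av := by
      rw [hAv, setAverage_eq, smul_eq_mul]
      apply mul_nonneg (by positivity)
      exact integral_nonneg (fun y => norm_nonneg _)
    calc 2 * N * B * Av ≤ 2 * N * (B + 1) * Av := by gcongr; linarith
      _ < 2 * N * (B + 1) * (e / (4 * (B + 1) * N)) := by gcongr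
      _ = e / 2 := by field_simp; ring
  rw [split]
  have := abs_add_le (∫ u, (h (α - r * u) - h α) * (k u - k' u)) (∫ u, (h (α - r * u) - h α) * k' u)
  linarith

lemma leb_points {h : ℝ → ℝ} {M a : ℝ} (H : BH h M a) : ∀ᵐ α : ℝ, ∀ N : ℝ, 0 < N →
    Tendsto (fun r : ℝ => ⨍ y in Metric.closedBall α (N * r), ‖h y - h α‖)
      (nhdsWithin 0 (Ioi 0)) (nhds 0) := by
  filter_upwards [IsUnifLocDoublingMeasure.ae_tendsto_average_norm_sub (μ := volume)
    H.integrable.locallyIntegrable 1] with α hα N hN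
  apply hα (fun _ => α) (fun r => N * r)
  · apply tendsto_nhdsWithin_iff.2
    constructor
    · have : Tendsto (fun r : ℝ => N * r) (nhds 0) (nhds (N * 0)) := tendsto_id.const_mul N
      rw [mul_zero] at this
      exact this.mono_left nhdsWithin_le_nhds
    · filter_upwards [self_mem_nhdsWithin] with r hr
      exact mul_pos hN hr
  · filter_upwards [self_mem_nhdsWithin] with r hr
    have : 0 < N * r := mul_pos hN hr
    simp [this.le]

lemma BH.int_trunc {h : ℝ → ℝ} {M a : ℝ} (H : BH h M a) {r : ℝ} (hr : 0 < r) (α : ℝ) :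
    Integrable (fun β => h β * (if r < |α - β| then 1 / (α - β) else 0)) := by
  apply H.int_bdd (C := 1 / r)
  · exact Measurable.ite (measurableSet_lt measurable_const (by fun_prop)) (by fun_prop) measurable_const
  · intro β _
    split_ifs with h
    · rw [abs_div, abs_one]; exact one_div_le_one_div_of_le hr h.le
    · simp [hr.le]

lemma trunc_eq (h : ℝ → ℝ) (r α : ℝ) :
    ∫ β in {β : ℝ | r < |α - β|}, h β / (α - β) =
      ∫ β, h β * (if r < |α - β| then 1 / (α - β) else 0) := by
  rw [← integral_indicator (measurableSet_lt measurable_const (by fun_prop))]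
  congr 1; funext β
  simp only [indicator, mem_ofPred_eq]
  split_ifs <;> simp [div_eq_mul_inv]

lemma BH.pv_tendsto {h : ℝ → ℝ} {M a : ℝ} (H : BH h M a) {α G : ℝ}
    (hd : HasDerivAt (Lpot h) G α)
    (hl : ∀ N : ℝ, 0 < N → Tendsto (fun r : ℝ => ⨍ y in Metric.closedBall α (N * r), ‖h y - h α‖)
      (nhdsWithin 0 (Ioi 0)) (nhds 0)) :
    Tendsto (fun r => ∫ β in {β : ℝ | r < |α - β|}, h β / (α - β)) (nhdsWithin 0 (Ioi 0)) (nhds G) := by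
  have t1 := leb_lemma H.meas H.bd kk_int hl
  -- symmetric difference quotient
  have t2 : Tendsto (fun r : ℝ => (Lpot h (α + r) - Lpot h (α - r)) / (2 * r)) (nhdsWithin 0 (Ioi 0)) (nhds G) := by
    have hp := hasDerivAt_iff_tendsto_slope_zero.1 hd
    have p1 : Tendsto (fun r : ℝ => r⁻¹ • (Lpot h (α + r) - Lpot h α)) (nhdsWithin 0 (Ioi 0)) (nhds G) :=
      hp.mono_left (nhdsWithin_mono _ (fun x hx => ne_of_gt hx))
    have p2 : Tendsto (fun r : ℝ => (-r)⁻¹ • (Lpot h (α + -r) - Lpot h α)) (nhdsWithin 0 (Ioi 0)) (nhds G) := by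
      refine hp.comp (tendsto_nhdsWithin_iff.2 ⟨?_, ?_⟩)
      · have : Tendsto (fun r : ℝ => -r) (nhds 0) (nhds (-0)) := tendsto_id.neg
        rw [neg_zero] at this
        exact this.mono_left nhdsWithin_le_nhds
      · filter_upwards [self_mem_nhdsWithin] with r hr
        simpa using (ne_of_gt hr)
    have p3 := (p1.add p2).div_const 2
    have : (G + G) / 2 = G := by ring
    rw [this] at p3
    refine p3.congr' ?_
    filter_upwards [self_mem_nhdsWithin] with r hr
    have hr : 0 < r := hr
    simp only [smul_eq_mul, ← sub_eq_add_neg]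
    field_simp
    ring
  have t3 := t2.add t1
  rw [add_zero] at t3
  refine t3.congr' ?_
  filter_upwards [self_mem_nhdsWithin] with r hr
  have hr : 0 < r := hr
  have i1 : Integrable (fun u => h (α - r * u) * kk u) :=
    kk_int.bdd_mul (c := M) (by have := H.meas; exact (by fun_prop : Measurable (fun u => h (α - r * u))).aestronglyMeasurable)
      (Eventually.of_forall (fun u => H.bd _))
  have e1 : ∫ u, (h (α - r * u) - h α) * kk u = ∫ u, h (α - r * u) * kk u := by
    have : (fun u => (h (α - r * u) - h α) * kk u) = fun u => h (α - r * u) * kk u - h α * kk u := by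
      funext u; ring
    rw [this, integral_sub i1 (kk_int.const_mul _), integral_const_mul, kk_zero]; ring
  have e2 : ∫ u, h (α - r * u) * kk u = ∫ β, h β * (kk ((α - β) / r) / r) := by
    have q1 : ∫ β, h β * (kk ((α - β) / r) / r) = ∫ t, h (α - t) * (kk (t / r) / r) := by
      have := integral_sub_left_eq_self (fun t => h (α - t) * (kk (t / r) / r)) volume α
      rw [← this]; simp
    have q2 := Measure.integral_comp_div (fun u => h (α - r * u) * kk u) r
    rw [q1]
    rw [abs_of_pos hr, smul_eq_mul] at q2
    have q3 : (fun t => h (α - t) * (kk (t / r) / r)) =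
        fun t => r⁻¹ * (h (α - r * (t / r)) * kk (t / r)) := by
      funext t
      have : r * (t / r) = t := by field_simp
      rw [this]; ring
    rw [q3, integral_const_mul, q2]
    field_simp
  rw [e1, e2, trunc_eq]
  unfold Lpot
  have j2 : Integrable (fun β => (h β * log (α + r - β) - h β * log (α - r - β)) / (2 * r)) :=
    ((H.int_log (α + r)).sub (H.int_log (α - r))).div_const _
  have j3 : Integrable (fun β => h β * (kk ((α - β) / r) / r)) := by
    have : Integrable (fun β => (fun u => h (α - r * u) * kk u) ((α - β) / r)) :=
      ((i1.comp_div hr.ne').comp_sub_left α)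
    refine (this.div_const r).congr (Eventually.of_forall (fun β => ?_))
    simp only
    have : α - r * ((α - β) / r) = β := by field_simp; ring
    rw [this]; ring
  rw [← integral_sub (H.int_log _) (H.int_log _), ← integral_div, ← integral_add j2 j3]
  · apply integral_congr_ae
    have n1 : ∀ᵐ β : ℝ, β ≠ α + r := by simp [ae_iff]
    have n2 : ∀ᵐ β : ℝ, β ≠ α - r := by simp [ae_iff]
    filter_upwards [n1, n2] with β h1 h2
    have g1 : α + r - β ≠ 0 := sub_ne_zero.2 h1.symm
    have g2 : α - r - β ≠ 0 := sub_ne_zero.2 h2.symm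
    have l1 : log ((α - β) / r + 1) = log (α + r - β) - log r := by
      rw [← Real.log_div g1 hr.ne']; congr 1; field_simp; ring
    have l2 : log ((α - β) / r - 1) = log (α - r - β) - log r := by
      rw [← Real.log_div g2 hr.ne']; congr 1; field_simp; ring
    unfold kk
    rw [l1, l2]
    have : (1 < |(α - β) / r|) ↔ r < |α - β| := by
      rw [abs_div, abs_of_pos hr, lt_div_iff₀ hr, one_mul]
    simp only [this]
    split_ifs
    · field_simp; ring
    · field_simp; ring

lemma ac_of_deriv {u u1 : ℝ → ℝ} {c B : ℝ} (hc : 0 < c)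
    (hu : ∀ x ∈ Icc (-c) c, HasDerivAt u (u1 x) x) (hB : ∀ x ∈ Icc (-c) c, |u1 x| ≤ B) :
    AbsolutelyContinuousOnInterval u (-c) c := by
  have hB0 : 0 ≤ B := (abs_nonneg _).trans (hB 0 ⟨by linarith, by linarith⟩)
  apply LipschitzOnWith.absolutelyContinuousOnInterval (K := B.toNNReal)
  rw [uIcc_of_le (by linarith)]
  apply Convex.lipschitzOnWith_of_nnnorm_hasDerivWithin_le (convex_Icc _ _)
    (fun x hx => (hu x hx).hasDerivWithinAt)
  intro x hx
  rw [← NNReal.coe_le_coe, Real.coe_toNNReal _ hB0]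
  simpa using hB x hx

lemma ibp {u F F1 : ℝ → ℝ} {c : ℝ} (hc : 0 < c) (hu : AbsolutelyContinuousOnInterval u (-c) c)
    (hF : ∀ x ∈ Icc (-c) c, HasDerivAt F (F1 x) x) (hF1 : ContinuousOn F1 (Icc (-c) c))
    (h1 : F c = 0) (h2 : F (-c) = 0) :
    ∫ x in (-c)..c, deriv u x * F x = - ∫ x in (-c)..c, u x * F1 x := by
  obtain ⟨B, hB⟩ := isCompact_Icc.exists_bound_of_continuousOn hF1
  have hFa := ac_of_deriv hc hF hB
  have := hFa.integral_mul_deriv_eq_deriv_mul hu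
  rw [h1, h2] at this
  have e1 : ∫ x in (-c)..c, deriv u x * F x = ∫ x in (-c)..c, F x * deriv u x := by
    congr 1; funext x; ring
  have e2 : ∫ x in (-c)..c, u x * F1 x = ∫ x in (-c)..c, deriv F x * u x := by
    apply intervalIntegral.integral_congr
    intro x hx
    rw [uIcc_of_le (by linarith)] at hx
    simp only
    rw [(hF x hx).deriv]; ring
  rw [e1, e2, this]; ring

lemma BH.Q_bd {h : ℝ → ℝ} {M a : ℝ} (H : BH h M a) (ha : 0 < a) {X : ℝ} (hX : 0 < X) (α : ℝ) :
    |Qp h X α| ≤ M * (2 * a / X) := by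
  have := H.abs_int_le (k := fun β => ((α - β) / ((α - β) ^ 2 + X ^ 2))) (u := fun _ => 1 / X)
    (by simp) (fun β _ => abs_q_le hX (α - β))
  refine this.trans (le_of_eq ?_)
  simp [ha.le]
  left; ring

lemma Rp_eq {h : ℝ → ℝ} {X : ℝ} (α : ℝ) : X * Rp h X α = Pp h X α := by
  unfold Rp Pp
  rw [← integral_const_mul]
  congr 1; funext β; ring

lemma BH.L_AC' {h : ℝ → ℝ} {M a c : ℝ} (H : BH h M a) (hc : 0 < c) (hca : c ≤ a) :
    AbsolutelyContinuousOnInterval (Lpot h) (-c) c := by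
  apply (H.L_AC (hc.trans_le hca)).mono
  rw [uIcc_of_le (by linarith), uIcc_of_le (by linarith)]
  exact Icc_subset_Icc (by linarith) (by linarith)

lemma BH.pv_ae {h : ℝ → ℝ} {M a c : ℝ} (H : BH h M a) (hc : 0 < c) (hca : c ≤ a) :
    ∀ᵐ α : ℝ, α ∈ Ioo (-c) c → Tendsto (fun r => ∫ β in {β : ℝ | r < |α - β|}, h β / (α - β))
      (nhdsWithin 0 (Ioi 0)) (nhds (deriv (Lpot h) α)) := by
  filter_upwards [(H.L_AC' hc hca).ae_differentiableAt, leb_points H] with α h1 h2 hα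
  rw [uIcc_of_le (by linarith)] at h1
  exact H.pv_tendsto (h1 (Ioo_subset_Icc_self hα)).hasDerivAt h2

lemma BH.GF_y {h : ℝ → ℝ} {M a c B y : ℝ} (H : BH h M a) (hM : 0 < M) (hc : 0 < c) (hca : c ≤ a)
    (hy : 0 < y)
    {F F1 : ℝ → ℝ} (hF : ∀ x ∈ Icc (-c) c, HasDerivAt F (F1 x) x)
    (hF1 : ContinuousOn F1 (Icc (-c) c)) (h1 : F c = 0) (h2 : F (-c) = 0)
    (hB : ∀ x ∈ Icc (-c) c, |F x| ≤ B) :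
    |∫ x in (-c)..c, Npot h y x * F1 x| ≤ 60 * M * a * B := by
  have ha : 0 < a := hc.trans_le hca
  have hB0 : 0 ≤ B := (abs_nonneg _).trans (hB 0 ⟨by linarith, by linarith⟩)
  have ac := ac_of_deriv (u := Npot h y) hc (fun x _ => H.hasDeriv_N_const hy x)
    (fun x _ => H.Q_bd ha hy x)
  have key := ibp hc ac hF hF1 h1 h2
  have e : ∫ x in (-c)..c, Npot h y x * F1 x = - ∫ x in (-c)..c, Qp h y x * F x := by
    have : ∀ x, deriv (Npot h y) x = Qp h y x := fun x => (H.hasDeriv_N_const hy x).deriv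
    simp only [this] at key
    linarith
  rw [e, abs_neg]
  have hQ := H.cont_Q hy
  have cF : ContinuousOn F (Icc (-c) c) := fun x hx => (hF x hx).continuousAt.continuousWithinAt
  have b1 : |∫ x in (-c)..c, Qp h y x * F x| ≤
      ∫ x in (-c)..c, (B / (2 * M)) * (Qp h y x) ^ 2 + B * M / 2 := by
    refine le_trans (le_of_eq (Real.norm_eq_abs _).symm) ?_
    apply intervalIntegral.norm_integral_le_of_norm_le (by linarith)
    · refine Eventually.of_forall (fun x hx => ?_)
      rw [norm_mul, Real.norm_eq_abs, Real.norm_eq_abs]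
      have q1 := hB x (Ioc_subset_Icc_self hx)
      have q2 : |Qp h y x| * |F x| ≤ |Qp h y x| * B := by gcongr
      refine q2.trans ?_
      have q3 : 0 ≤ (|Qp h y x| - M) ^ 2 := sq_nonneg _
      have : B / (2 * M) * (Qp h y x) ^ 2 + B * M / 2 - |Qp h y x| * B
          = B / (2 * M) * (|Qp h y x| - M) ^ 2 := by
        rw [← sq_abs (Qp h y x)]; field_simp; ring
      have : 0 ≤ B / (2 * M) * (|Qp h y x| - M) ^ 2 := by positivity
      linarith
    · exact (by fun_prop : Continuous (fun x => (B / (2 * M)) * (Qp h y x) ^ 2 + B * M / 2)).intervalIntegrable _ _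
  have c2 : Continuous (fun x => (Qp h y x) ^ 2) := by fun_prop
  have b2 : ∫ x in (-c)..c, (Qp h y x) ^ 2 ≤ ∫ x in (-(2 * a))..(2 * a), (Qp h y x) ^ 2 := by
    apply intervalIntegral.integral_mono_interval (by linarith) (by linarith) (by linarith)
    · exact Eventually.of_forall (fun x => sq_nonneg _)
    · exact c2.intervalIntegrable _ _
  have b3 := H.Q_sq ha hy
  rw [intervalIntegral.integral_add ((c2.const_mul _).intervalIntegrable _ _) (by simp),
    intervalIntegral.integral_const_mul, intervalIntegral.integral_const] at b1
  have b4 : B / (2 * M) * ∫ x in (-c)..c, (Qp h y x) ^ 2 ≤ B / (2 * M) * (104 * M ^ 2 * a) := by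
    gcongr; linarith
  have b5 : B / (2 * M) * (104 * M ^ 2 * a) = 52 * M * a * B := by field_simp; ring
  have b6 : (c - -c) • (B * M / 2) ≤ M * a * B := by
    rw [smul_eq_mul]
    have : M * c * B ≤ M * a * B := by gcongr
    linarith
  have : 0 ≤ M * a * B := by positivity
  linarith

lemma BH.cont_N {h : ℝ → ℝ} {M a : ℝ} (H : BH h M a) {y : ℝ} (hy : 0 < y) :
    Continuous (Npot h y) :=
  continuous_iff_continuousAt.2 (fun x => (H.hasDeriv_N_const hy x).continuousAt)

/-- weak bound on the Hilbert transform -/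
lemma BH.GF {h : ℝ → ℝ} {M a c B : ℝ} (H : BH h M a) (hM : 0 < M) (hc : 0 < c) (hca : c ≤ a)
    {F F1 : ℝ → ℝ} (hF : ∀ x ∈ Icc (-c) c, HasDerivAt F (F1 x) x)
    (hF1 : ContinuousOn F1 (Icc (-c) c)) (h1 : F c = 0) (h2 : F (-c) = 0)
    (hB : ∀ x ∈ Icc (-c) c, |F x| ≤ B) :
    |∫ x in (-c)..c, deriv (Lpot h) x * F x| ≤ 60 * M * a * B := by
  have ac := H.L_AC' hc hca
  rw [ibp hc ac hF hF1 h1 h2, abs_neg]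
  obtain ⟨K, hK⟩ := isCompact_Icc.exists_bound_of_continuousOn hF1
  have hK0 : 0 ≤ K := (norm_nonneg _).trans (hK 0 ⟨by linarith, by linarith⟩)
  have hcu : uIcc (-c) c = Icc (-c) c := uIcc_of_le (by linarith)
  have iL : IntervalIntegrable (fun x => Lpot h x * F1 x) volume (-c) c :=
    (ac.continuousOn.mul (hcu ▸ hF1)).intervalIntegrable
  have main : ∀ y : ℝ, 0 < y → |∫ x in (-c)..c, Lpot h x * F1 x| ≤ 60 * M * a * B + (6 * M * K * (2 * c)) * y := by
    intro y hy
    have iN : IntervalIntegrable (fun x => Npot h y x * F1 x) volume (-c) c :=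
      ((H.cont_N hy).continuousOn.mul (hcu ▸ hF1)).intervalIntegrable
    have g1 := H.GF_y hM hc hca hy hF hF1 h1 h2 hB
    have g2 : |(∫ x in (-c)..c, Lpot h x * F1 x) - ∫ x in (-c)..c, Npot h y x * F1 x| ≤
        (6 * M * y * K) * |c - -c| := by
      rw [← intervalIntegral.integral_sub iL iN]
      refine le_trans (le_of_eq (Real.norm_eq_abs _).symm) ?_
      apply intervalIntegral.norm_integral_le_of_norm_le_const
      intro x hx
      rw [uIoc_of_le (by linarith)] at hx
      rw [← sub_mul, norm_mul]
      have := H.L_sub_N hy x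
      have := hK x (Ioc_subset_Icc_self hx)
      rw [Real.norm_eq_abs]
      gcongr
    rw [abs_of_pos (by linarith : 0 < c - -c)] at g2
    have := abs_sub_abs_le_abs_sub (∫ x in (-c)..c, Lpot h x * F1 x) (∫ x in (-c)..c, Npot h y x * F1 x)
    have e : (6 * M * y * K) * (c - -c) = (6 * M * K * (2 * c)) * y := by ring
    linarith
  have lim : Tendsto (fun y : ℝ => 60 * M * a * B + (6 * M * K * (2 * c)) * y) (nhdsWithin 0 (Ioi 0))
      (nhds (60 * M * a * B + (6 * M * K * (2 * c)) * 0)) := by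
    apply Tendsto.mono_left _ nhdsWithin_le_nhds
    exact (by fun_prop : Continuous (fun y : ℝ => 60 * M * a * B + (6 * M * K * (2 * c)) * y)).tendsto 0
  rw [mul_zero, add_zero] at lim
  apply ge_of_tendsto lim
  filter_upwards [self_mem_nhdsWithin] with y hy using main y hy

/-- comparison of the Hilbert transform with the regularized one -/
lemma BH.GQ {h : ℝ → ℝ} {M a c B0 B1 e X0 X2 : ℝ} (H : BH h M a) (hM : 0 < M) (hc : 0 < c) (hca : c ≤ a)
    {X X1 : ℝ → ℝ} {s : Set ℝ} (hs : IsOpen s) (hcs : Icc (-c) c ⊆ s) (he : 0 < e)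
    (hX : ∀ x ∈ s, HasDerivAt X (X1 x) x ∧ e ≤ X x ∧ X x ≤ X0 ∧ |X1 x| ≤ X2)
    {F F1 : ℝ → ℝ} (hF : ∀ x ∈ Icc (-c) c, HasDerivAt F (F1 x) x)
    (hF1 : ContinuousOn F1 (Icc (-c) c)) (h1 : F c = 0) (h2 : F (-c) = 0)
    (hB : ∀ x ∈ Icc (-c) c, |F x| ≤ B0) (hB1 : ∀ x ∈ Icc (-c) c, |F1 x| ≤ B1) :
    IntervalIntegrable (fun x => (deriv (Lpot h) x - Qp h (X x) x) * F x) volume (-c) c ∧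
    |∫ x in (-c)..c, (deriv (Lpot h) x - Qp h (X x) x) * F x| ≤
      12 * c * M * X0 * B1 + 8 * c * M * X2 * B0 := by
  have ha : 0 < a := hc.trans_le hca
  have h0 : (0:ℝ) ∈ Icc (-c) c := ⟨by linarith, by linarith⟩
  have hX0 : 0 < X0 := he.trans_le ((hX 0 (hcs h0)).2.1.trans (hX 0 (hcs h0)).2.2.1)
  have hX2 : 0 ≤ X2 := (abs_nonneg _).trans (hX 0 (hcs h0)).2.2.2
  have hB0 : 0 ≤ B0 := (abs_nonneg _).trans (hB 0 h0)
  have hB10 : 0 ≤ B1 := (abs_nonneg _).trans (hB1 0 h0)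
  have ac := H.L_AC' hc hca
  have hcu : uIcc (-c) c = Icc (-c) c := uIcc_of_le (by linarith)
  have hN : ∀ x ∈ Icc (-c) c, HasDerivAt (fun x => Npot h (X x) x)
      (Qp h (X x) x + X1 x * Pp h (X x) x) x := by
    intro x hx
    have := H.hasDeriv_N (X := X) (X1 := X1) (c := e) (K := X0 * X2) (α₀ := x) he (hs.mem_nhds (hcs hx))
      (fun x hx => ⟨(hX x hx).1, (hX x hx).2.1, by
        rw [abs_mul, abs_of_pos (he.trans_le (hX x hx).2.1)]
        have := (hX x hx).2.2.1
        have := (hX x hx).2.2.2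
        gcongr⟩)
    rw [← Rp_eq]
    convert this using 1; ring
  have hR : ∀ x ∈ Icc (-c) c, |X1 x * Pp h (X x) x| ≤ X2 * (4 * M) := by
    intro x hx
    have q := hX x (hcs hx)
    rw [abs_mul]
    have := H.P_le (he.trans_le q.2.1) x
    have := q.2.2.2
    gcongr
  have acN : AbsolutelyContinuousOnInterval (fun x => Npot h (X x) x) (-c) c := by
    apply ac_of_deriv hc hN (B := M * (2 * a / e) + X2 * (4 * M))
    intro x hx
    refine (abs_add_le _ _).trans (add_le_add ?_ (hR x hx))
    refine (H.Q_bd ha (he.trans_le (hX x (hcs hx)).2.1) x).trans ?_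
    have := (hX x (hcs hx)).2.1
    gcongr
  have k1 := ibp hc ac hF hF1 h1 h2
  have k2 := ibp hc acN hF hF1 h1 h2
  have cF : ContinuousOn F (Icc (-c) c) := fun x hx => (hF x hx).continuousAt.continuousWithinAt
  have iL : IntervalIntegrable (fun x => Lpot h x * F1 x) volume (-c) c :=
    (ac.continuousOn.mul (hcu ▸ hF1)).intervalIntegrable
  have iN : IntervalIntegrable (fun x => Npot h (X x) x * F1 x) volume (-c) c :=
    (acN.continuousOn.mul (hcu ▸ hF1)).intervalIntegrable
  have iL' : IntervalIntegrable (fun x => deriv (Lpot h) x * F x) volume (-c) c :=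
    ac.intervalIntegrable_deriv.mul_continuousOn (hcu ▸ cF)
  have iN' : IntervalIntegrable (fun x => deriv (fun x => Npot h (X x) x) x * F x) volume (-c) c :=
    acN.intervalIntegrable_deriv.mul_continuousOn (hcu ▸ cF)
  -- X1 Pp F integrable
  have cX : ContinuousOn X (Icc (-c) c) := fun x hx => (hX x (hcs hx)).1.continuousAt.continuousWithinAt
  have mm : IntervalIntegrable (fun x => X1 x * Pp h (X x) x * F x) volume (-c) c := by
    rw [intervalIntegrable_iff_integrableOn_Ioc_of_le (by linarith)]
    have mX : AEMeasurable X (volume.restrict (Ioc (-c) c)) :=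
      (cX.mono Ioc_subset_Icc_self).aemeasurable measurableSet_Ioc
    have mX1 : AEMeasurable X1 (volume.restrict (Ioc (-c) c)) := by
      have : AEMeasurable (deriv X) (volume.restrict (Ioc (-c) c)) := (measurable_deriv X).aemeasurable
      refine this.congr ?_
      filter_upwards [ae_restrict_mem measurableSet_Ioc] with x hx
      exact (hX x (hcs (Ioc_subset_Icc_self hx))).1.deriv
    have mP : AEMeasurable (fun x => Pp h (X x) x) (volume.restrict (Ioc (-c) c)) := by
      have hm := H.meas
      have m2 : StronglyMeasurable (fun p : ℝ × ℝ => ∫ β, h β * (p.1 / ((p.2 - β) ^ 2 + p.1 ^ 2))) := by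
        apply StronglyMeasurable.integral_prod_right (f := fun (p : ℝ × ℝ) β => h β * (p.1 / ((p.2 - β) ^ 2 + p.1 ^ 2)))
        apply Measurable.stronglyMeasurable
        unfold Function.uncurry
        fun_prop
      exact m2.measurable.comp_aemeasurable (mX.prodMk aemeasurable_id)
    have mF : AEMeasurable F (volume.restrict (Ioc (-c) c)) :=
      (cF.mono Ioc_subset_Icc_self).aemeasurable measurableSet_Ioc
    apply Integrable.of_bound (C := X2 * (4 * M) * B0)
    · exact ((mX1.mul mP).mul mF).aestronglyMeasurable
    · filter_upwards [ae_restrict_mem measurableSet_Ioc] with x hx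
      have hx := Ioc_subset_Icc_self hx
      rw [norm_mul, Real.norm_eq_abs, Real.norm_eq_abs]
      have := hR x hx
      have := hB x hx
      gcongr
  have eN : ∀ x ∈ Icc (-c) c, (deriv (Lpot h) x - Qp h (X x) x) * F x =
      deriv (Lpot h) x * F x - deriv (fun x => Npot h (X x) x) x * F x + X1 x * Pp h (X x) x * F x := by
    intro x hx
    rw [(hN x hx).deriv]; ring
  have iall : IntervalIntegrable (fun x => deriv (Lpot h) x * F x - deriv (fun x => Npot h (X x) x) x * F x +
      X1 x * Pp h (X x) x * F x) volume (-c) c := (iL'.sub iN').add mm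
  refine ⟨?_, ?_⟩
  · refine iall.congr ?_
    intro x hx
    rw [uIoc_of_le (by linarith)] at hx
    exact (eN x (Ioc_subset_Icc_self hx)).symm
  · have e1 : ∫ x in (-c)..c, (deriv (Lpot h) x - Qp h (X x) x) * F x =
        ∫ x in (-c)..c, (deriv (Lpot h) x * F x - deriv (fun x => Npot h (X x) x) x * F x +
          X1 x * Pp h (X x) x * F x) := by
      apply intervalIntegral.integral_congr
      intro x hx
      rw [hcu] at hx
      exact eN x hx
    have iLN : IntervalIntegrable (fun x => deriv (Lpot h) x * F x - deriv (fun x => Npot h (X x) x) x * F x)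
      volume (-c) c := iL'.sub iN'
    rw [e1, intervalIntegral.integral_add iLN mm, intervalIntegral.integral_sub iL' iN', k1, k2]
    have e2 : (-∫ x in (-c)..c, Lpot h x * F1 x) - -∫ x in (-c)..c, Npot h (X x) x * F1 x =
        - ∫ x in (-c)..c, (Lpot h x * F1 x - Npot h (X x) x * F1 x) := by
      rw [intervalIntegral.integral_sub iL iN]; ring
    rw [e2]
    refine (abs_add_le _ _).trans (add_le_add ?_ ?_)
    · rw [abs_neg]
      have : |∫ x in (-c)..c, (Lpot h x * F1 x - Npot h (X x) x * F1 x)| ≤ (6 * M * X0 * B1) * |c - -c| := by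
        refine le_trans (le_of_eq (Real.norm_eq_abs _).symm) ?_
        apply intervalIntegral.norm_integral_le_of_norm_le_const
        intro x hx
        rw [uIoc_of_le (by linarith)] at hx
        have hx := Ioc_subset_Icc_self hx
        rw [← sub_mul, norm_mul, Real.norm_eq_abs, Real.norm_eq_abs]
        have g1 := H.L_sub_N (he.trans_le (hX x (hcs hx)).2.1) x
        have g2 : 6 * M * X x ≤ 6 * M * X0 := by have := (hX x (hcs hx)).2.2.1; gcongr
        have := hB1 x hx
        have := g1.trans g2
        gcongr
      rw [abs_of_pos (by linarith : 0 < c - -c)] at this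
      linarith
    · have : |∫ x in (-c)..c, X1 x * Pp h (X x) x * F x| ≤ (X2 * (4 * M) * B0) * |c - -c| := by
        refine le_trans (le_of_eq (Real.norm_eq_abs _).symm) ?_
        apply intervalIntegral.norm_integral_le_of_norm_le_const
        intro x hx
        rw [uIoc_of_le (by linarith)] at hx
        have hx := Ioc_subset_Icc_self hx
        rw [norm_mul, Real.norm_eq_abs, Real.norm_eq_abs]
        have := hR x hx
        have := hB x hx
        gcongr
      rw [abs_of_pos (by linarith : 0 < c - -c)] at this
      linarith

structure FF (f f1 f2 : ℝ → ℝ) (A δ : ℝ) : Prop where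
  d1 : ∀ x ∈ Ioo (-δ) δ, HasDerivAt f (f1 x) x
  d2 : ∀ x ∈ Ioo (-δ) δ, HasDerivAt f1 (f2 x) x
  c2 : ContinuousOn f2 (Ioo (-δ) δ)
  b2 : ∀ x ∈ Ioo (-δ) δ, |f2 x| ≤ A
  z0 : f 0 = 0
  z1 : f1 0 = 0

lemma ff_of {f : ℝ → ℝ} {A δ : ℝ} (hδ : 0 < δ) (hf : ContDiffOn ℝ 5 f (Ioo (-δ) δ)) (h0 : f 0 = 0)
    (h1 : derivWithin f (Ioo (-δ) δ) 0 = 0)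
    (hb : ∀ x ∈ Ioo (-δ) δ, |iteratedDerivWithin 2 f (Ioo (-δ) δ) x| ≤ A) :
    FF f (deriv f) (deriv (deriv f)) A δ := by
  have g1 : ContDiffOn ℝ 4 (deriv f) (Ioo (-δ) δ) := hf.deriv_of_isOpen isOpen_Ioo (by norm_num)
  have g2 : ContDiffOn ℝ 3 (deriv (deriv f)) (Ioo (-δ) δ) := g1.deriv_of_isOpen isOpen_Ioo (by norm_num)
  refine ⟨?_, ?_, g2.continuousOn, ?_, h0, ?_⟩
  · intro x hx
    exact ((hf.contDiffAt (isOpen_Ioo.mem_nhds hx)).differentiableAt (by norm_num)).hasDerivAt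
  · intro x hx
    exact ((g1.contDiffAt (isOpen_Ioo.mem_nhds hx)).differentiableAt (by norm_num)).hasDerivAt
  · intro x hx
    have := hb x hx
    rw [iteratedDerivWithin_of_isOpen isOpen_Ioo hx, iteratedDeriv_succ, iteratedDeriv_one] at this
    exact this
  · have hm : (0:ℝ) ∈ Ioo (-δ) δ := ⟨by linarith, hδ⟩
    rw [← derivWithin_of_isOpen isOpen_Ioo hm]; exact h1

lemma mvt_le {u u1 : ℝ → ℝ} {B x y δ : ℝ} (hx : x ∈ Ioo (-δ) δ) (hy : y ∈ Ioo (-δ) δ)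
    (hu : ∀ z ∈ uIcc x y, HasDerivAt u (u1 z) z) (hB : ∀ z ∈ uIcc x y, |u1 z| ≤ B) :
    |u x - u y| ≤ B * |x - y| := by
  have := Convex.norm_image_sub_le_of_norm_hasDerivWithin_le (f := u) (f' := u1) (C := B) (s := uIcc x y)
    (fun z hz => (hu z hz).hasDerivWithinAt) (fun z hz => hB z hz) (convex_uIcc _ _)
    (right_mem_uIcc) (left_mem_uIcc)
  simpa using this

lemma uIcc_sub {x y δ : ℝ} (hx : x ∈ Ioo (-δ) δ) (hy : y ∈ Ioo (-δ) δ) : uIcc x y ⊆ Ioo (-δ) δ :=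
  (ordConnected_Ioo.uIcc_subset hx hy)

lemma abs_le_of_uIcc {x y z : ℝ} (hz : z ∈ uIcc x y) : |x - z| ≤ |x - y| ∧ |z| ≤ |x| + |x - y| := by
  have h := abs_sub_left_of_mem_uIcc hz
  have h1 : |x - z| ≤ |x - y| := by rw [abs_sub_comm x z, abs_sub_comm x y]; exact h
  refine ⟨h1, ?_⟩
  have : |z| ≤ |x| + |x - z| := by
    have := abs_sub_abs_le_abs_sub z x
    rw [abs_sub_comm z x] at this
    linarith
  linarith

section
variable {f f1 f2 : ℝ → ℝ} {A δ : ℝ}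

lemma FF.zero_mem {x : ℝ} (hx : x ∈ Ioo (-δ) δ) : (0:ℝ) ∈ Ioo (-δ) δ := by
  have := hx.1.trans hx.2
  exact ⟨by linarith, by linarith⟩

lemma FF.b1 (H : FF f f1 f2 A δ) {x : ℝ} (hx : x ∈ Ioo (-δ) δ) : |f1 x| ≤ A * |x| := by
  have h0 := FF.zero_mem hx
  have := mvt_le hx h0 (fun z hz => H.d2 z (uIcc_sub hx h0 hz)) (fun z hz => H.b2 z (uIcc_sub hx h0 hz))
  simpa [H.z1] using this

lemma FF.D (H : FF f f1 f2 A δ) (hA : 0 ≤ A) {x y : ℝ} (hx : x ∈ Ioo (-δ) δ) (hy : y ∈ Ioo (-δ) δ) :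
    |f x - f y| ≤ A * (|x| + |x - y|) * |x - y| := by
  refine mvt_le hx hy (fun z hz => H.d1 z (uIcc_sub hx hy hz)) (fun z hz => ?_)
  refine (H.b1 (uIcc_sub hx hy hz)).trans ?_
  have := (abs_le_of_uIcc hz).2
  gcongr

lemma FF.b0 (H : FF f f1 f2 A δ) (hA : 0 ≤ A) {x : ℝ} (hx : x ∈ Ioo (-δ) δ) : |f x| ≤ A * x ^ 2 := by
  have h0 := FF.zero_mem hx
  have := H.D hA h0 hx
  simp only [H.z0, zero_sub, abs_neg, abs_zero, zero_add] at this
  rw [← sq_abs x]; linarith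

lemma FF.E (H : FF f f1 f2 A δ) (hA : 0 ≤ A) {x y : ℝ} (hx : x ∈ Ioo (-δ) δ) (hy : y ∈ Ioo (-δ) δ) :
    |f x - f y - f1 x * (x - y)| ≤ A * (x - y) ^ 2 := by
  have key := mvt_le (u := fun z => f z - f1 x * z) (u1 := fun z => f1 z - f1 x) (B := A * |x - y|) hx hy
    (fun z hz => by
      have := (H.d1 z (uIcc_sub hx hy hz)).fun_sub ((hasDerivAt_id' z).const_mul (f1 x))
      rw [mul_one] at this
      exact this)
    (fun z hz => by
      have hz' := uIcc_sub hx hy hz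
      have q := mvt_le hz' hx (fun w hw => H.d2 w (uIcc_sub hz' hx hw)) (fun w hw => H.b2 w (uIcc_sub hz' hx hw))
      refine q.trans ?_
      have := (abs_le_of_uIcc hz).1
      rw [abs_sub_comm z x]
      gcongr)
  have e : f x - f1 x * x - (f y - f1 x * y) = f x - f y - f1 x * (x - y) := by ring
  simp only [e] at key
  rw [← sq_abs (x - y)]; linarith

lemma FF.cont (H : FF f f1 f2 A δ) : ContinuousOn f (Ioo (-δ) δ) :=
  fun x hx => (H.d1 x hx).continuousAt.continuousWithinAt

end

lemma meas_trunc (r α : ℝ) : MeasurableSet {β : ℝ | r < |α - β|} :=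
  measurableSet_lt measurable_const (by fun_prop)

lemma pv_lemma {h F R : ℝ → ℝ} {M a α G c : ℝ} (H : BH h M a) (hR : Integrable R)
    (hF : ∀ β, β ≠ α → F β = c * (h β / (α - β)) + R β)
    (hG : Tendsto (fun r => ∫ β in {β : ℝ | r < |α - β|}, h β / (α - β)) (nhdsWithin 0 (Ioi 0)) (nhds G)) :
    pvI F α = c * G + ∫ β, R β := by
  unfold pvI
  apply Tendsto.limUnder_eq
  have t2 : Tendsto (fun r => ∫ β in {β : ℝ | r < |α - β|}, R β) (nhdsWithin 0 (Ioi 0)) (nhds (∫ β, R β)) := by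
    have : ∀ r : ℝ, ∫ β in {β : ℝ | r < |α - β|}, R β = ∫ β, indicator {β : ℝ | r < |α - β|} R β :=
      fun r => (integral_indicator (meas_trunc r α)).symm
    simp only [this]
    apply tendsto_integral_filter_of_dominated_convergence (fun β => ‖R β‖)
    · exact Eventually.of_forall (fun r => (hR.indicator (meas_trunc r α)).aestronglyMeasurable)
    · exact Eventually.of_forall (fun r => Eventually.of_forall (fun β => norm_indicator_le_norm_self _ _))
    · exact hR.norm
    · have n1 : ∀ᵐ β : ℝ, β ≠ α := by simp [ae_iff]
      filter_upwards [n1] with β hβ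
      apply tendsto_const_nhds.congr'
      have : 0 < |α - β| := abs_pos.2 (sub_ne_zero.2 hβ.symm)
      filter_upwards [mem_nhdsWithin_of_mem_nhds (Iio_mem_nhds this)] with r hr
      rw [indicator_of_mem]
      exact hr
  refine ((hG.const_mul c).add t2).congr' ?_
  filter_upwards [self_mem_nhdsWithin] with r hr
  have hr : 0 < r := hr
  have i1 : IntegrableOn (fun β => c * (h β / (α - β))) {β : ℝ | r < |α - β|} := by
    apply Integrable.const_mul
    refine ((H.int_trunc hr α).integrableOn (s := {β : ℝ | r < |α - β|})).congr_fun ?_ (meas_trunc r α)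
    intro β hβ
    have hβ : r < |α - β| := hβ
    simp only [if_pos hβ]; ring
  rw [← integral_const_mul, ← integral_add i1 hR.integrableOn]
  apply setIntegral_congr_fun (meas_trunc r α)
  intro β hβ
  have hβ : r < |α - β| := hβ
  simp only
  rw [hF β]
  rintro rfl
  simp at hβ; linarith

/-- log integral -/
lemma log_int {e b : ℝ} (he : 0 < e) (hb : 0 ≤ b) :
    ∫ x in (-b)..b, |x| * (e / (x ^ 2 + e ^ 2)) = e * log (1 + b ^ 2 / e ^ 2) := by
  have hc : Continuous (fun x : ℝ => |x| * (e / (x ^ 2 + e ^ 2))) := by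
    apply continuous_abs.mul
    apply continuous_const.div (by fun_prop)
    intro x; positivity
  have h0 : ∫ x in (0:ℝ)..b, |x| * (e / (x ^ 2 + e ^ 2)) = e / 2 * log (1 + b ^ 2 / e ^ 2) := by
    have : ∫ x in (0:ℝ)..b, |x| * (e / (x ^ 2 + e ^ 2)) =
        e / 2 * log (b ^ 2 + e ^ 2) - e / 2 * log (0 ^ 2 + e ^ 2) := by
      apply intervalIntegral.integral_eq_sub_of_hasDerivAt (f := fun x => e / 2 * log (x ^ 2 + e ^ 2))
      · intro x hx
        rw [uIcc_of_le hb] at hx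
        rw [abs_of_nonneg hx.1]
        have : HasDerivAt (fun x : ℝ => x ^ 2 + e ^ 2) (2 * x) x := by
          have := ((hasDerivAt_id x).pow 2).add_const (e ^ 2)
          simpa using this
        have := (this.log (by positivity)).const_mul (e / 2)
        have e2 : x * (e / (x ^ 2 + e ^ 2)) = e / 2 * (2 * x / (x ^ 2 + e ^ 2)) := by ring
        rw [e2]
        exact this
      · exact hc.intervalIntegrable _ _
    rw [this, ← mul_sub, ← Real.log_div (by positivity) (by positivity)]
    congr 2
    field_simp
    ring
  have h1 : ∫ x in (-b)..0, |x| * (e / (x ^ 2 + e ^ 2)) = e / 2 * log (1 + b ^ 2 / e ^ 2) := by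
    rw [← h0]
    have := intervalIntegral.integral_comp_neg (a := -b) (b := 0) (fun x => |x| * (e / (x ^ 2 + e ^ 2)))
    simpa using this
  rw [← intervalIntegral.integral_add_adjacent_intervals (hc.intervalIntegrable _ _) (hc.intervalIntegrable _ _),
    h0, h1]
  ring

lemma log_int_le {e b : ℝ} (he : 0 < e) (he1 : e ≤ 1 / 100) (hb : 0 ≤ b) (hb2 : b ^ 2 ≤ 9 * e) :
    ∫ x in (-b)..b, |x| * (e / (x ^ 2 + e ^ 2)) ≤ 2 * e * log (1 / e) := by
  rw [log_int he hb]
  have : log (1 + b ^ 2 / e ^ 2) ≤ log ((1 / e) ^ 2) := by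
    apply Real.log_le_log (by positivity)
    have : 1 + b ^ 2 / e ^ 2 = (e ^ 2 + b ^ 2) / e ^ 2 := by field_simp
    rw [this, div_pow, one_pow]
    gcongr
    nlinarith
  rw [Real.log_pow] at this
  push_cast at this
  calc e * log (1 + b ^ 2 / e ^ 2) ≤ e * (2 * log (1 / e)) := by gcongr
    _ = _ := by ring

lemma poisson_Ioo {e b c α : ℝ} (he : 0 < e) :
    IntegrableOn (fun β => e / ((α - β) ^ 2 + e ^ 2)) (Ioo b c) ∧
    ∫ β in Ioo b c, e / ((α - β) ^ 2 + e ^ 2) ≤ 4 := by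
  have i := (poisson_int he).1.comp_sub_left α
  refine ⟨i.integrableOn, ?_⟩
  have h1 : ∫ β in Ioo b c, e / ((α - β) ^ 2 + e ^ 2) ≤ ∫ β, e / ((α - β) ^ 2 + e ^ 2) :=
    setIntegral_le_integral i (Eventually.of_forall (fun β => by simp only [Pi.zero_apply]; positivity))
  have h2 := integral_sub_left_eq_self (fun t : ℝ => e / (t ^ 2 + e ^ 2)) volume α
  rw [h2, (poisson_int he).2] at h1
  linarith [Real.pi_le_four]

lemma log_Ioo {e r α : ℝ} (he : 0 < e) (he1 : e ≤ 1 / 100) (hr : 0 < r) (hr2 : r ^ 2 = e)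
    (hα : α ∈ Ioo (-r) r) :
    IntegrableOn (fun β => |α - β| * (e / ((α - β) ^ 2 + e ^ 2))) (Ioo (-(2 * r)) (2 * r)) ∧
    ∫ β in Ioo (-(2 * r)) (2 * r), |α - β| * (e / ((α - β) ^ 2 + e ^ 2)) ≤ 2 * e * log (1 / e) := by
  have hc : Continuous (fun x : ℝ => |x| * (e / (x ^ 2 + e ^ 2))) := by
    apply continuous_abs.mul
    apply continuous_const.div (by fun_prop)
    intro x; positivity
  have hc2 : Continuous (fun β : ℝ => |α - β| * (e / ((α - β) ^ 2 + e ^ 2))) :=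
    hc.comp (continuous_const.sub continuous_id)
  refine ⟨(hc2.integrableOn_Icc).mono_set Ioo_subset_Icc_self, ?_⟩
  rw [← integral_Ioc_eq_integral_Ioo, ← intervalIntegral.integral_of_le (by linarith)]
  rw [intervalIntegral.integral_comp_sub_left (fun x => |x| * (e / (x ^ 2 + e ^ 2))) α]
  refine le_trans ?_ (log_int_le (b := 3 * r) he he1 (by linarith) (by nlinarith))
  apply intervalIntegral.integral_mono_interval (by linarith [hα.1]) (by linarith) (by linarith [hα.2])
  · exact Eventually.of_forall (fun x => by simp only [Pi.zero_apply]; positivity)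
  · exact hc.intervalIntegrable _ _

lemma W_bound {t X r s : ℝ} (hr : 0 < r) (hX : 0 < X) (hs0 : 0 ≤ s) (hs1 : s ≤ 1) (h : |t| ≤ r → s = 1) :
    |(1 - s) * (t⁻¹ * (X ^ 2 / (t ^ 2 + X ^ 2)))| ≤ X ^ 2 / r ^ 3 := by
  by_cases ht : |t| ≤ r
  · rw [h ht]; simp; positivity
  · push Not at ht
    have ht0 : 0 < |t| := hr.trans ht
    rw [abs_mul, abs_mul, abs_inv, abs_of_nonneg (by linarith : 0 ≤ 1 - s),
      abs_of_nonneg (by positivity : 0 ≤ X ^ 2 / (t ^ 2 + X ^ 2))]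
    have h1 : X ^ 2 / (t ^ 2 + X ^ 2) ≤ X ^ 2 / r ^ 2 := by
      gcongr
      have : r ^ 2 ≤ |t| ^ 2 := by gcongr
      rw [sq_abs] at this
      nlinarith [sq_nonneg X]
    have h2 : |t|⁻¹ ≤ r⁻¹ := by gcongr
    calc (1 - s) * (|t|⁻¹ * (X ^ 2 / (t ^ 2 + X ^ 2))) ≤ 1 * (r⁻¹ * (X ^ 2 / r ^ 2)) := by
          gcongr; linarith
      _ = X ^ 2 / r ^ 3 := by field_simp

lemma sq_frac {q p : ℝ} : |q ^ 2 / (1 + q ^ 2) - p ^ 2 / (1 + p ^ 2)| ≤ |q - p| * (|q| + |p|) := by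
  have e : q ^ 2 / (1 + q ^ 2) - p ^ 2 / (1 + p ^ 2) = (q - p) * (q + p) / ((1 + q ^ 2) * (1 + p ^ 2)) := by
    field_simp; ring
  rw [e, abs_div, abs_of_pos (by positivity : 0 < (1 + q ^ 2) * (1 + p ^ 2)), abs_mul]
  have h1 : |q - p| * |q + p| ≤ |q - p| * (|q| + |p|) := by gcongr; exact abs_add_le _ _
  refine le_trans ?_ h1
  apply div_le_self (by positivity)
  nlinarith [sq_nonneg q, sq_nonneg p, sq_nonneg (q * p)]

lemma e1_bound {t X Y A ε z : ℝ} (hε : 0 < ε) (hA : 1 ≤ A) (hz : 0 ≤ z) (hX : ε ≤ X) (hX2 : X ≤ 34 * A * ε)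
    (hY : ε ≤ Y) (hY2 : Y ≤ 34 * A * ε) (hD : |X - Y| ≤ A * z * |t|) :
    |t / (t ^ 2 + Y ^ 2) - t / (t ^ 2 + X ^ 2)| ≤ 68 * A ^ 2 * z * (ε / (t ^ 2 + ε ^ 2)) := by
  have hX0 : 0 < X := hε.trans_le hX
  have hY0 : 0 < Y := hε.trans_le hY
  have e : t / (t ^ 2 + Y ^ 2) - t / (t ^ 2 + X ^ 2) =
      t * (X - Y) / (t ^ 2 + Y ^ 2) * ((X + Y) / (t ^ 2 + X ^ 2)) := by
    field_simp; ring
  rw [e, abs_mul, abs_div, abs_mul, abs_of_pos (by positivity : 0 < t ^ 2 + Y ^ 2),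
    abs_of_pos (by positivity : 0 < (X + Y) / (t ^ 2 + X ^ 2))]
  have h1 : |t| * |X - Y| / (t ^ 2 + Y ^ 2) ≤ A * z := by
    rw [div_le_iff₀ (by positivity)]
    have : |t| * |X - Y| ≤ |t| * (A * z * |t|) := by gcongr
    have e2 : |t| * (A * z * |t|) = A * z * t ^ 2 := by rw [← sq_abs t]; ring
    have : 0 ≤ A * z * Y ^ 2 := by positivity
    linarith
  have h2 : (X + Y) / (t ^ 2 + X ^ 2) ≤ (68 * A * ε) / (t ^ 2 + ε ^ 2) := by
    gcongr; linarith
  calc _ ≤ A * z * ((68 * A * ε) / (t ^ 2 + ε ^ 2)) := by gcongr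
    _ = _ := by ring

structure KB (t α ρ ε A X Y D p s0 s1 sa : ℝ) : Prop where
  hρ : 0 < ρ
  hε : ε = ρ ^ 2
  hA : 1 ≤ A
  ha : |α| ≤ ρ
  ht : |t| ≤ 3 * ρ
  hX : ε ≤ X
  hX2 : X ≤ 34 * A * ε
  hY : ε ≤ Y
  hY2 : Y ≤ 34 * A * ε
  hD : X - Y = D
  hD1 : |D| ≤ A * (|α| + |t|) * |t|
  hD2 : |D - p * t| ≤ A * t ^ 2
  hp : |p| ≤ A * |α|
  s0m : s0 ∈ Icc (0:ℝ) 1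
  s1m : s1 ∈ Icc (0:ℝ) 1
  sam : sa ∈ Icc (0:ℝ) 1
  s0e : |t| ≤ ρ / 2 → s0 = 1
  s1e : |t| ≤ ρ / 128 → s1 = 1

section
variable {t α ρ ε A X Y D p s0 s1 sa : ℝ}

def kR2 (t D p s0 : ℝ) : ℝ := t / (t ^ 2 + D ^ 2) * s0 - (1 - p ^ 2 / (1 + p ^ 2)) / t
def kRH (t X s1 sa : ℝ) : ℝ := t⁻¹ * (X ^ 2 / (t ^ 2 + X ^ 2)) * sa * s1 - sa / t
def kR4 (t Y s0 : ℝ) : ℝ := t / (t ^ 2 + Y ^ 2) * s0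
def kR (t X Y D p s0 s1 sa : ℝ) : ℝ :=
  kRH t X s1 sa + kR4 t Y s0 - kR2 t D p s0 + (sa - 1) * (t / (t ^ 2 + X ^ 2))

lemma KB.qp (K : KB t α ρ ε A X Y D p s0 s1 sa) (h0 : t ≠ 0) :
    |D / t| ≤ A * (|α| + |t|) ∧
    |((D / t) ^ 2 / (1 + (D / t) ^ 2) - p ^ 2 / (1 + p ^ 2)) / t| ≤ 5 * A ^ 2 * ρ := by
  have ht : 0 < |t| := abs_pos.2 h0
  have hA := K.hA
  have hρ := K.hρ
  have q1 : |D / t| ≤ A * (|α| + |t|) := by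
    rw [abs_div, div_le_iff₀ ht]; exact K.hD1
  refine ⟨q1, ?_⟩
  have q2 : |D / t - p| ≤ A * |t| := by
    have : D / t - p = (D - p * t) / t := by field_simp
    rw [this, abs_div, div_le_iff₀ ht]
    have := K.hD2
    rw [← sq_abs t] at this
    linarith
  rw [abs_div, div_le_iff₀ ht]
  refine sq_frac.trans ?_
  have q3 : |D / t| + |p| ≤ 5 * A * ρ := by
    have := K.hp
    have h1 := K.ha
    have h2 := K.ht
    have : A * |α| ≤ A * ρ := by gcongr
    have : A * |t| ≤ A * (3 * ρ) := by gcongr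
    linarith
  calc |D / t - p| * (|D / t| + |p|) ≤ (A * |t|) * (5 * A * ρ) := by gcongr
    _ = _ := by ring

lemma frac_eq (h0 : t ≠ 0) : t / (t ^ 2 + D ^ 2) = (1 - (D / t) ^ 2 / (1 + (D / t) ^ 2)) / t := by
  have : 0 < t ^ 2 + D ^ 2 := by positivity
  have e : 1 - (D / t) ^ 2 / (1 + (D / t) ^ 2) = t ^ 2 / (t ^ 2 + D ^ 2) := by
    have : (1 + (D / t) ^ 2) = (t ^ 2 + D ^ 2) / t ^ 2 := by field_simp
    rw [this]
    field_simp
    ring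
  rw [e]; field_simp

lemma cut_bound {r s : ℝ} (hr : 0 < r) (h0 : 0 ≤ s) (h1 : s ≤ 1) (h : |t| ≤ r → s = 1) :
    |(s - 1) / t| ≤ 1 / r := by
  by_cases ht : |t| ≤ r
  · rw [h ht]; simp [hr.le]
  · push Not at ht
    rw [abs_div]
    have : |s - 1| ≤ 1 := by rw [abs_le]; constructor <;> linarith
    gcongr

lemma KB.R2 (K : KB t α ρ ε A X Y D p s0 s1 sa) : |kR2 t D p s0| ≤ 2 / ρ + 5 * A ^ 2 * ρ := by
  have hρ := K.hρ
  have hA := K.hA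
  rcases eq_or_ne t 0 with rfl | h0
  · simp [kR2]; positivity
  have q := K.qp h0
  have c := cut_bound (t := t) (by linarith : 0 < ρ / 2) K.s0m.1 K.s0m.2 K.s0e
  have e : kR2 t D p s0 = (s0 - 1) / t * (t ^ 2 / (t ^ 2 + D ^ 2)) -
     ((D / t) ^ 2 / (1 + (D / t) ^ 2) - p ^ 2 / (1 + p ^ 2)) / t := by
    have h1 := frac_eq (D := D) h0
    have h2 : (s0 - 1) / t * (t ^ 2 / (t ^ 2 + D ^ 2)) = (s0 - 1) * (t / (t ^ 2 + D ^ 2)) := by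
      field_simp
    rw [h2, kR2]
    have : t / (t ^ 2 + D ^ 2) * s0 = (s0 - 1) * (t / (t ^ 2 + D ^ 2)) + t / (t ^ 2 + D ^ 2) := by ring
    rw [this, add_sub_assoc]
    nth_rw 2 [h1]
    ring
  rw [e]
  have b : |(s0 - 1) / t * (t ^ 2 / (t ^ 2 + D ^ 2))| ≤ 2 / ρ := by
    rw [abs_mul, abs_of_nonneg (by positivity : 0 ≤ t ^ 2 / (t ^ 2 + D ^ 2))]
    have : t ^ 2 / (t ^ 2 + D ^ 2) ≤ 1 := by
      apply div_le_one_of_le₀ <;> nlinarith [sq_nonneg t, sq_nonneg D]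
    have e2 : 1 / (ρ / 2) = 2 / ρ := by field_simp
    rw [e2] at c
    calc _ ≤ 2 / ρ * 1 := by gcongr
      _ = _ := by ring
  exact (abs_sub _ _).trans (add_le_add b q.2)

lemma KB.WH (K : KB t α ρ ε A X Y D p s0 s1 sa) :
    |(1 - s1) * (t⁻¹ * (X ^ 2 / (t ^ 2 + X ^ 2)))| ≤ 2500000000 * A ^ 2 * ρ ∧
    |(1 - s0) * (t⁻¹ * (X ^ 2 / (t ^ 2 + X ^ 2)))| ≤ 10000 * A ^ 2 * ρ := by
  have hρ := K.hρ
  have hA := K.hA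
  have hX := K.hX2
  have hε : 0 < ε := by rw [K.hε]; positivity
  have hX0 : 0 < X := hε.trans_le K.hX
  have hX2 : X ^ 2 ≤ (34 * A * ρ ^ 2) ^ 2 := by rw [K.hε] at hX; gcongr
  constructor
  · refine (W_bound (by linarith : 0 < ρ / 128) hX0 K.s1m.1 K.s1m.2 K.s1e).trans ?_
    rw [div_le_iff₀ (by positivity)]
    refine hX2.trans ?_
    have : 0 < A ^ 2 * ρ ^ 4 := by positivity
    nlinarith
  · refine (W_bound (by linarith : 0 < ρ / 2) hX0 K.s0m.1 K.s0m.2 K.s0e).trans ?_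
    rw [div_le_iff₀ (by positivity)]
    refine hX2.trans ?_
    have : 0 < A ^ 2 * ρ ^ 4 := by positivity
    nlinarith

lemma kRH_eq (hX : 0 < X) (h0 : t ≠ 0) : kRH t X s1 sa = -(sa * ((1 - s1) * (t⁻¹ * (X ^ 2 / (t ^ 2 + X ^ 2))))) -
      sa * (t / (t ^ 2 + X ^ 2)) := by
  have : 0 < t ^ 2 + X ^ 2 := by positivity
  unfold kRH
  field_simp
  ring

lemma KB.RH (K : KB t α ρ ε A X Y D p s0 s1 sa) : |kRH t X s1 sa| ≤ 2500000000 * A ^ 2 * ρ + 1 / ε := by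
  have hρ := K.hρ
  have hA := K.hA
  have hε : 0 < ε := by rw [K.hε]; positivity
  have hX0 : 0 < X := hε.trans_le K.hX
  rcases eq_or_ne t 0 with rfl | h0
  · simp [kRH]; positivity
  rw [kRH_eq hX0 h0]
  refine (abs_sub _ _).trans (add_le_add ?_ ?_)
  · rw [abs_neg, abs_mul, abs_of_nonneg K.sam.1]
    have := K.WH.1
    have h2 := K.sam.2
    calc sa * _ ≤ 1 * (2500000000 * A ^ 2 * ρ) := by gcongr
      _ = _ := one_mul _
  · rw [abs_mul, abs_of_nonneg K.sam.1]
    have := abs_q_le hX0 t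
    have h2 := K.sam.2
    have h3 : 1 / X ≤ 1 / ε := one_div_le_one_div_of_le hε K.hX
    calc sa * _ ≤ 1 * (1 / ε) := by gcongr; linarith
      _ = _ := one_mul _

lemma KB.R4 (K : KB t α ρ ε A X Y D p s0 s1 sa) : |kR4 t Y s0| ≤ 1 / ε := by
  have hρ := K.hρ
  have hε : 0 < ε := by rw [K.hε]; positivity
  have hY0 : 0 < Y := hε.trans_le K.hY
  unfold kR4
  rw [abs_mul, abs_of_nonneg K.s0m.1]
  have := abs_q_le hY0 t
  have h2 := K.s0m.2
  have h3 : 1 / Y ≤ 1 / ε := one_div_le_one_div_of_le hε K.hY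
  have h4 := K.s0m.1
  calc _ ≤ (1 / ε) * 1 := by gcongr; linarith
      _ = _ := mul_one _

lemma KB.R (K : KB t α ρ ε A X Y D p s0 s1 sa) : |kR t X Y D p s0 s1 sa| ≤
    3000000000 * A ^ 2 * ρ + 68 * A ^ 2 * (|α| + |t|) * (ε / (t ^ 2 + ε ^ 2)) := by
  have hρ := K.hρ
  have hA := K.hA
  have hε : 0 < ε := by rw [K.hε]; positivity
  have hX0 : 0 < X := hε.trans_le K.hX
  have hY0 : 0 < Y := hε.trans_le K.hY
  rcases eq_or_ne t 0 with rfl | h0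
  · simp [kR, kRH, kR2, kR4]; positivity
  have q := K.qp h0
  set m := p ^ 2 / (1 + p ^ 2) with hm
  set W := t⁻¹ * (X ^ 2 / (t ^ 2 + X ^ 2)) with hW
  set Q := (D / t) ^ 2 / (1 + (D / t) ^ 2) with hQ
  have eW : W = 1 / t - t / (t ^ 2 + X ^ 2) := by rw [hW]; field_simp; ring
  have e : kR t X Y D p s0 s1 sa = -(sa * ((1 - s1) * W)) + (1 - s0) * W +
      s0 * (t / (t ^ 2 + Y ^ 2) - t / (t ^ 2 + X ^ 2)) + ((s0 - 1) / t * Q + (Q - m) / t) := by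
    have h1 := kRH_eq (s1 := s1) (sa := sa) hX0 h0
    have h2 : kR2 t D p s0 = (1 - Q) / t * s0 - (1 - m) / t := by rw [kR2, frac_eq h0]
    rw [kR, h1, h2, kR4, ← hW]
    have : t / (t ^ 2 + X ^ 2) = 1 / t - W := by rw [eW]; ring
    rw [this]
    ring
  rw [e]
  have hW1 := K.WH
  have b1 : |-(sa * ((1 - s1) * W))| ≤ 2500000000 * A ^ 2 * ρ := by
    rw [abs_neg, abs_mul, abs_of_nonneg K.sam.1]
    have := hW1.1
    have h2 := K.sam.2
    calc sa * _ ≤ 1 * (2500000000 * A ^ 2 * ρ) := by gcongr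
      _ = _ := one_mul _
  have b2 := hW1.2
  have b3 : |s0 * (t / (t ^ 2 + Y ^ 2) - t / (t ^ 2 + X ^ 2))| ≤ 68 * A ^ 2 * (|α| + |t|) * (ε / (t ^ 2 + ε ^ 2)) := by
    have h1 := e1_bound (t := t) (z := |α| + |t|) hε hA (by positivity) K.hX K.hX2 K.hY K.hY2 (by rw [K.hD]; exact K.hD1)
    rw [abs_mul, abs_of_nonneg K.s0m.1]
    have h2 := K.s0m.2
    calc s0 * _ ≤ 1 * (68 * A ^ 2 * (|α| + |t|) * (ε / (t ^ 2 + ε ^ 2))) := by gcongr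
      _ = _ := one_mul _
  have b4 : |(s0 - 1) / t * Q| ≤ 32 * A ^ 2 * ρ := by
    have c := cut_bound (t := t) (by linarith : 0 < ρ / 2) K.s0m.1 K.s0m.2 K.s0e
    have q0 : 0 ≤ Q := by rw [hQ]; positivity
    have q1 : Q ≤ (A * (4 * ρ)) ^ 2 := by
      have g1 : Q ≤ |D / t| ^ 2 := by
        rw [sq_abs, hQ]
        apply div_le_self (by positivity); nlinarith [sq_nonneg (D / t)]
      refine g1.trans ?_
      have g2 := q.1
      have h1 := K.ha
      have h2 := K.ht
      have g3 : A * (|α| + |t|) ≤ A * (4 * ρ) := by gcongr; linarith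
      have g4 := g2.trans g3
      gcongr
    rw [abs_mul, abs_of_nonneg q0]
    calc _ ≤ 1 / (ρ / 2) * (A * (4 * ρ)) ^ 2 := by gcongr
      _ = _ := by field_simp; ring
  have b5 := q.2
  have t1 := abs_add_le (-(sa * ((1 - s1) * W)) + (1 - s0) * W +
      s0 * (t / (t ^ 2 + Y ^ 2) - t / (t ^ 2 + X ^ 2))) ((s0 - 1) / t * Q + (Q - m) / t)
  have t2 := abs_add_le (-(sa * ((1 - s1) * W)) + (1 - s0) * W) (s0 * (t / (t ^ 2 + Y ^ 2) - t / (t ^ 2 + X ^ 2)))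
  have t3 := abs_add_le (-(sa * ((1 - s1) * W))) ((1 - s0) * W)
  have t4 := abs_add_le ((s0 - 1) / t * Q) ((Q - m) / t)
  have : 0 < A ^ 2 * ρ := by positivity
  linarith
end

structure Cx (δ A ε ρ : ℝ) (f f1 f2 g g1 g2 : ℝ → ℝ) : Prop where
  hA : 1 ≤ A
  hρ : 0 < ρ
  hε : ε = ρ ^ 2
  hs : Real.sqrt ε = ρ
  h4 : 4 * ρ < δ
  he1 : ε ≤ 1 / 100
  Hf : FF f f1 f2 A δ
  Hg : FF g g1 g2 A δ
  pos : ∀ α ∈ Ioo (-(4 * ρ)) (4 * ρ), ∀ β ∈ Ioo (-(4 * ρ)) (4 * ρ), -ε ≤ f α + g β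

section
variable {δ A ε ρ : ℝ} {f f1 f2 g g1 g2 ψ h : ℝ → ℝ}

lemma Cx.symm (K : Cx δ A ε ρ f f1 f2 g g1 g2) : Cx δ A ε ρ g g1 g2 f f1 f2 :=
  ⟨K.hA, K.hρ, K.hε, K.hs, K.h4, K.he1, K.Hg, K.Hf, fun α hα β hβ => by
    rw [add_comm]; exact K.pos β hβ α hα⟩

lemma Cx.epos (K : Cx δ A ε ρ f f1 f2 g g1 g2) : 0 < ε := by
  have := K.hρ; rw [K.hε]; positivity

lemma Cx.sub4 (K : Cx δ A ε ρ f f1 f2 g g1 g2) : Ioo (-(4 * ρ)) (4 * ρ) ⊆ Ioo (-δ) δ :=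
  Ioo_subset_Ioo (by linarith [K.h4]) K.h4.le

lemma Ioo_abs {x r : ℝ} : x ∈ Ioo (-r) r ↔ |x| < r := by rw [abs_lt]; rfl

lemma Cx.XY (K : Cx δ A ε ρ f f1 f2 g g1 g2) {α β : ℝ} (hα : α ∈ Ioo (-(4 * ρ)) (4 * ρ))
    (hβ : β ∈ Ioo (-(4 * ρ)) (4 * ρ)) : ε ≤ 2 * ε + f α + g β ∧ 2 * ε + f α + g β ≤ 34 * A * ε := by
  have hA := K.hA
  have he := K.epos
  refine ⟨by linarith [K.pos α hα β hβ], ?_⟩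
  have h1 := (le_abs_self _).trans (K.Hf.b0 (by linarith) (K.sub4 hα))
  have h2 := (le_abs_self _).trans (K.Hg.b0 (by linarith) (K.sub4 hβ))
  have h3 : ∀ x ∈ Ioo (-(4 * ρ)) (4 * ρ), x ^ 2 ≤ 16 * ε := by
    intro x hx
    rw [K.hε]
    nlinarith [hx.1, hx.2]
  have h4 : A * α ^ 2 ≤ A * (16 * ε) := by have := h3 α hα; gcongr
  have h5 : A * β ^ 2 ≤ A * (16 * ε) := by have := h3 β hβ; gcongr
  nlinarith

lemma scut_zero (hψ : IsCutoff ψ) {r t : ℝ} (hr : 0 < r) (ht : r < |t|) : scut ψ r t = 0 := by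
  apply hψ.2.2.2.1
  rw [abs_div, abs_of_pos hr, lt_div_iff₀ hr, one_mul]; exact ht

lemma scut_one (hψ : IsCutoff ψ) {r t : ℝ} (hr : 0 < r) (ht : |t| ≤ r / 2) : scut ψ r t = 1 := by
  apply hψ.2.2.2.2
  rw [abs_div, abs_of_pos hr, div_le_iff₀ hr]; linarith

lemma Cx.kb (K : Cx δ A ε ρ f f1 f2 g g1 g2) (hψ : IsCutoff ψ) {α β : ℝ} (hα : α ∈ Ioo (-ρ) ρ)
    (hβ : β ∈ Ioo (-(2 * ρ)) (2 * ρ)) :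
    KB (α - β) α ρ ε A (Xt ε f g α) (2 * ε + g α + f β) (f α - f β) (f1 α)
      (scut ψ ρ (α - β)) (scut ψ (ρ / 2 ^ 6) (α - β)) (scut ψ (ρ / 2 ^ 6) α) := by
  have hρ := K.hρ
  have hA : 0 ≤ A := by linarith [K.hA]
  have hα4 : α ∈ Ioo (-(4 * ρ)) (4 * ρ) := ⟨by linarith [hα.1], by linarith [hα.2]⟩
  have hβ4 : β ∈ Ioo (-(4 * ρ)) (4 * ρ) := ⟨by linarith [hβ.1], by linarith [hβ.2]⟩
  have x1 := K.XY hα4 hα4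
  have x2 := K.symm.XY hα4 hβ4
  refine ⟨hρ, K.hε, K.hA, (Ioo_abs.1 hα).le, ?_, x1.1, x1.2, x2.1, x2.2, ?_, K.Hf.D hA (K.sub4 hα4) (K.sub4 hβ4),
    K.Hf.E hA (K.sub4 hα4) (K.sub4 hβ4), K.Hf.b1 (K.sub4 hα4), hψ.2.2.1 _, hψ.2.2.1 _, hψ.2.2.1 _,
    fun h => scut_one hψ hρ h, fun h => scut_one hψ (by positivity) (h.trans (by linarith))⟩
  · rw [abs_le]; constructor <;> linarith [hα.1, hα.2, hβ.1, hβ.2]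
  · unfold Xt; ring

lemma Cx.cut0 (K : Cx δ A ε ρ f f1 f2 g g1 g2) (hψ : IsCutoff ψ) {α β : ℝ} (hα : α ∈ Ioo (-ρ) ρ)
    (hβ : β ∉ Ioo (-(2 * ρ)) (2 * ρ)) :
    scut ψ ρ (α - β) = 0 ∧ scut ψ (ρ / 2 ^ 6) (α - β) = 0 := by
  have hρ := K.hρ
  have h1 : ρ < |α - β| := by
    have h1 : 2 * ρ ≤ |β| := by
      by_contra hc
      push Not at hc
      exact hβ (Ioo_abs.2 hc)
    have h2 := Ioo_abs.1 hα
    have := abs_sub_abs_le_abs_sub β α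
    rw [abs_sub_comm] at this
    linarith
  exact ⟨scut_zero hψ hρ h1, scut_zero hψ (by positivity) (by linarith)⟩

lemma Cx.aem (K : Cx δ A ε ρ f f1 f2 g g1 g2) : AEMeasurable f (volume.restrict (Ioo (-(2 * ρ)) (2 * ρ))) := by
  have hρ := K.hρ
  exact (K.Hf.cont.mono (Ioo_subset_Ioo (by linarith [K.h4]) (by linarith [K.h4]))).aemeasurable measurableSet_Ioo

lemma intOn_bdd {k : ℝ → ℝ} {a b C : ℝ} (hk : AEMeasurable k (volume.restrict (Ioo a b)))
    (hb : ∀ x ∈ Ioo a b, |k x| ≤ C) : IntegrableOn k (Ioo a b) := by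
  apply Integrable.of_bound (C := C) hk.aestronglyMeasurable
  filter_upwards [ae_restrict_mem measurableSet_Ioo] with x hx
  exact hb x hx

lemma Cx.ident (K : Cx δ A ε ρ f f1 f2 g g1 g2) (hψ : IsCutoff ψ) {M : ℝ}
    (H : BH (indicator (Ioo (-(2 * ρ)) (2 * ρ)) h) M (2 * ρ)) {α G : ℝ} (hα : α ∈ Ioo (-ρ) ρ)
    (hG : Tendsto (fun r => ∫ β in {β : ℝ | r < |α - β|}, (indicator (Ioo (-(2 * ρ)) (2 * ρ)) h) β / (α - β))
      (nhdsWithin 0 (Ioi 0)) (nhds G)) :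
    Hop ψ ε f g h α + T4 ψ ε g f h α - T2 ψ ε f h α = (2 * π)⁻¹ *
      ((scut ψ (ρ / 2 ^ 6) α - 1) * (G - Qp (indicator (Ioo (-(2 * ρ)) (2 * ρ)) h) (Xt ε f g α) α)
        + f1 α ^ 2 / (1 + f1 α ^ 2) * G
        + ∫ β, (indicator (Ioo (-(2 * ρ)) (2 * ρ)) h) β * kR (α - β) (Xt ε f g α) (2 * ε + g α + f β)
          (f α - f β) (f1 α) (scut ψ ρ (α - β)) (scut ψ (ρ / 2 ^ 6) (α - β)) (scut ψ (ρ / 2 ^ 6) α)) := by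
  have hρ := K.hρ
  have mψ : Measurable ψ := hψ.1.continuous.measurable
  have mf := K.aem
  set S := Ioo (-(2 * ρ)) (2 * ρ) with hS
  set k := indicator S h with hk
  set X := Xt ε f g α with hX
  set sa := scut ψ (ρ / 2 ^ 6) α with hsa
  set p := f1 α with hp
  have hXp : 0 < X := by
    have hα4 : α ∈ Ioo (-(4 * ρ)) (4 * ρ) := ⟨by linarith [hα.1], by linarith [hα.2]⟩
    exact K.epos.trans_le (K.XY hα4 hα4).1
  have i2 : Integrable (fun β => k β * kR2 (α - β) (f α - f β) p (scut ψ ρ (α - β))) := by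
    apply H.int_mul
    apply intOn_bdd _ (fun β hβ => (K.kb hψ hα hβ).R2)
    unfold kR2 scut
    fun_prop
  have iH : Integrable (fun β => k β * kRH (α - β) X (scut ψ (ρ / 2 ^ 6) (α - β)) sa) := by
    apply H.int_mul
    apply intOn_bdd _ (fun β hβ => (K.kb hψ hα hβ).RH)
    unfold kRH scut
    fun_prop
  have i4 : Integrable (fun β => k β * kR4 (α - β) (2 * ε + g α + f β) (scut ψ ρ (α - β))) := by
    apply H.int_mul
    apply intOn_bdd _ (fun β hβ => (K.kb hψ hα hβ).R4)
    unfold kR4 scut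
    fun_prop
  have iq := (H.int_q hXp α).const_mul (sa - 1)
  have e2 : T2 ψ ε f h α = (2 * π)⁻¹ * ((1 - p ^ 2 / (1 + p ^ 2)) * G +
      ∫ β, k β * kR2 (α - β) (f α - f β) p (scut ψ ρ (α - β))) := by
    unfold T2
    congr 1
    apply pv_lemma H i2 _ hG
    intro β _
    rw [K.hs]
    by_cases hβ : β ∈ S
    · rw [hk, indicator_of_mem hβ, kR2]; ring
    · rw [hk, indicator_of_notMem hβ, (K.cut0 hψ hα hβ).1]; ring
  have eH : Hop ψ ε f g h α = (2 * π)⁻¹ * (sa * G +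
      ∫ β, k β * kRH (α - β) X (scut ψ (ρ / 2 ^ 6) (α - β)) sa) := by
    unfold Hop
    congr 1
    apply pv_lemma H iH _ hG
    intro β _
    unfold Hker
    rw [K.hs, ← hX, ← hsa]
    by_cases hβ : β ∈ S
    · rw [hk, indicator_of_mem hβ, kRH]; ring
    · rw [hk, indicator_of_notMem hβ, (K.cut0 hψ hα hβ).2]; ring
  have e4 : T4 ψ ε g f h α = (2 * π)⁻¹ * ∫ β, k β * kR4 (α - β) (2 * ε + g α + f β) (scut ψ ρ (α - β)) := by
    unfold T4
    congr 1
    congr 1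
    funext β
    rw [K.hs]
    by_cases hβ : β ∈ S
    · rw [hk, indicator_of_mem hβ, kR4]; ring
    · rw [hk, indicator_of_notMem hβ, (K.cut0 hψ hα hβ).1]; ring
  have eR : ∫ β, k β * kR (α - β) X (2 * ε + g α + f β) (f α - f β) p (scut ψ ρ (α - β))
      (scut ψ (ρ / 2 ^ 6) (α - β)) sa = (∫ β, k β * kRH (α - β) X (scut ψ (ρ / 2 ^ 6) (α - β)) sa)
      + (∫ β, k β * kR4 (α - β) (2 * ε + g α + f β) (scut ψ ρ (α - β)))
      - (∫ β, k β * kR2 (α - β) (f α - f β) p (scut ψ ρ (α - β)))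
      + (sa - 1) * Qp k X α := by
    have e1 : ∀ β, k β * kR (α - β) X (2 * ε + g α + f β) (f α - f β) p (scut ψ ρ (α - β))
      (scut ψ (ρ / 2 ^ 6) (α - β)) sa = k β * kRH (α - β) X (scut ψ (ρ / 2 ^ 6) (α - β)) sa
      + k β * kR4 (α - β) (2 * ε + g α + f β) (scut ψ ρ (α - β))
      - k β * kR2 (α - β) (f α - f β) p (scut ψ ρ (α - β))
      + (sa - 1) * (k β * ((α - β) / ((α - β) ^ 2 + X ^ 2))) := by
      intro β; unfold kR; ring
    simp only [e1]
    have j1 : Integrable (fun β => k β * kRH (α - β) X (scut ψ (ρ / 2 ^ 6) (α - β)) sa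
      + k β * kR4 (α - β) (2 * ε + g α + f β) (scut ψ ρ (α - β))) := iH.add i4
    have j2 : Integrable (fun β => k β * kRH (α - β) X (scut ψ (ρ / 2 ^ 6) (α - β)) sa
      + k β * kR4 (α - β) (2 * ε + g α + f β) (scut ψ ρ (α - β))
      - k β * kR2 (α - β) (f α - f β) p (scut ψ ρ (α - β))) := j1.sub i2
    rw [integral_add j2 iq, integral_sub j1 i2, integral_add iH i4, integral_const_mul]
    rfl
  rw [e2, eH, e4, eR]
  ring

lemma Cx.remainder (K : Cx δ A ε ρ f f1 f2 g g1 g2) (hψ : IsCutoff ψ) {M : ℝ}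
    (H : BH (indicator (Ioo (-(2 * ρ)) (2 * ρ)) h) M (2 * ρ)) {α : ℝ} (hα : α ∈ Ioo (-ρ) ρ) :
    |∫ β, (indicator (Ioo (-(2 * ρ)) (2 * ρ)) h) β * kR (α - β) (Xt ε f g α) (2 * ε + g α + f β)
          (f α - f β) (f1 α) (scut ψ ρ (α - β)) (scut ψ (ρ / 2 ^ 6) (α - β)) (scut ψ (ρ / 2 ^ 6) α)| ≤
      M * A ^ 2 * (12000000000 * ε + 272 * |α| + 136 * ε * log (1 / ε)) := by
  have hρ := K.hρ
  have hε := K.epos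
  have hA := K.hA
  have hM : 0 ≤ M := (abs_nonneg _).trans (H.bd 0)
  have i1 := poisson_Ioo (e := ε) (b := -(2 * ρ)) (c := 2 * ρ) (α := α) K.epos
  have i2 := log_Ioo K.epos K.he1 hρ K.hε.symm hα
  have i0 : IntegrableOn (fun _ : ℝ => 3000000000 * A ^ 2 * ρ) (Ioo (-(2 * ρ)) (2 * ρ)) :=
    continuous_const.integrableOn_Icc.mono_set Ioo_subset_Icc_self
  have i3 := i1.1.const_mul (68 * A ^ 2 * |α|)
  have i4 := i2.1.const_mul (68 * A ^ 2)
  have i5 : IntegrableOn (fun β => 3000000000 * A ^ 2 * ρ + 68 * A ^ 2 * |α| * (ε / ((α - β) ^ 2 + ε ^ 2)))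
    (Ioo (-(2 * ρ)) (2 * ρ)) := i0.add i3
  have i6 : IntegrableOn (fun β => 3000000000 * A ^ 2 * ρ + 68 * A ^ 2 * |α| * (ε / ((α - β) ^ 2 + ε ^ 2))
      + 68 * A ^ 2 * (|α - β| * (ε / ((α - β) ^ 2 + ε ^ 2))))
    (Ioo (-(2 * ρ)) (2 * ρ)) := i5.add i4
  refine (H.abs_int_le i6 (fun β hβ => ?_)).trans ?_
  · refine (K.kb hψ hα hβ).R.trans (le_of_eq ?_)
    ring
  · have v : volume.real (Ioo (-(2 * ρ)) (2 * ρ)) = 4 * ρ := by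
      rw [Real.volume_real_Ioo_of_le (by linarith)]; ring
    have q0 : ∫ β in Ioo (-(2 * ρ)) (2 * ρ), 3000000000 * A ^ 2 * ρ = 4 * ρ * (3000000000 * A ^ 2 * ρ) := by
      rw [setIntegral_const, v, smul_eq_mul]
    have q3 : ∫ β in Ioo (-(2 * ρ)) (2 * ρ), 68 * A ^ 2 * |α| * (ε / ((α - β) ^ 2 + ε ^ 2)) =
        68 * A ^ 2 * |α| * ∫ β in Ioo (-(2 * ρ)) (2 * ρ), ε / ((α - β) ^ 2 + ε ^ 2) := integral_const_mul _ _
    have q4 : ∫ β in Ioo (-(2 * ρ)) (2 * ρ), 68 * A ^ 2 * (|α - β| * (ε / ((α - β) ^ 2 + ε ^ 2))) =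
        68 * A ^ 2 * ∫ β in Ioo (-(2 * ρ)) (2 * ρ), |α - β| * (ε / ((α - β) ^ 2 + ε ^ 2)) := integral_const_mul _ _
    rw [integral_add i5 i4, integral_add i0 i3, q0, q3, q4, mul_assoc M]
    have b1 : 68 * A ^ 2 * |α| * ∫ β in Ioo (-(2 * ρ)) (2 * ρ), ε / ((α - β) ^ 2 + ε ^ 2) ≤ 68 * A ^ 2 * |α| * 4 := by
      gcongr; exact i1.2
    have b2 : 68 * A ^ 2 * ∫ β in Ioo (-(2 * ρ)) (2 * ρ), |α - β| * (ε / ((α - β) ^ 2 + ε ^ 2)) ≤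
        68 * A ^ 2 * (2 * ε * log (1 / ε)) := by
      gcongr; exact i2.2
    have b3 : 4 * ρ * (3000000000 * A ^ 2 * ρ) = 12000000000 * A ^ 2 * ε := by rw [K.hε]; ring
    refine mul_le_mul_of_nonneg_left ?_ hM
    linarith
end

lemma psi_bd {ψ : ℝ → ℝ} (hψ : IsCutoff ψ) : ∃ S, 0 ≤ S ∧ ∀ t, |deriv ψ t| ≤ S := by
  have hc : HasCompactSupport ψ := by
    apply HasCompactSupport.intro (K := Icc (-1) 1) isCompact_Icc
    intro x hx
    apply hψ.2.2.2.1
    by_contra hh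
    push Not at hh
    exact hx (abs_le.1 hh)
  have hd : Continuous (deriv ψ) := hψ.1.continuous_deriv (by exact_mod_cast le_top)
  obtain ⟨S, hS⟩ := hc.deriv.exists_bound_of_continuous hd
  exact ⟨S, (norm_nonneg _).trans (hS 0), hS⟩

lemma psi_d0 {ψ : ℝ → ℝ} (hψ : IsCutoff ψ) {t : ℝ} (ht : |t| < 1 / 2) : deriv ψ t = 0 := by
  have : ψ =ᶠ[nhds t] fun _ => 1 := by
    filter_upwards [(continuous_abs.isOpen_preimage _ isOpen_Iio).mem_nhds (show t ∈ abs ⁻¹' Iio (1/2 : ℝ) from ht)] with x hx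
    exact hψ.2.2.2.2 x (le_of_lt hx)
  rw [this.deriv_eq]; simp

section
variable {δ A ε ρ : ℝ} {f f1 f2 g g1 g2 ψ φ : ℝ → ℝ}

lemma phi_end (hs : tsupport φ ⊆ Ioo (-ρ) ρ) : φ ρ = 0 ∧ φ (-ρ) = 0 := by
  constructor
  · by_contra hh
    exact lt_irrefl _ (hs (subset_tsupport _ hh)).2
  · by_contra hh
    exact lt_irrefl _ (hs (subset_tsupport _ hh)).1

lemma Cx.piece1 (K : Cx δ A ε ρ f f1 f2 g g1 g2) (hψ : IsCutoff ψ) {k : ℝ → ℝ} {M S : ℝ} (hM : 0 < M)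
    (H : BH k M (2 * ρ)) (hS0 : 0 ≤ S) (hS : ∀ t, |deriv ψ t| ≤ S) (hφ : InC2 δ ε φ) (hs : tsupport φ ⊆ Ioo (-ρ) ρ) :
    IntervalIntegrable (fun x => (deriv (Lpot k) x - Qp k (Xt ε f g x) x) * ((scut ψ (ρ / 2 ^ 6) x - 1) * φ x)) volume (-ρ) ρ ∧
    |∫ x in (-ρ)..ρ, (deriv (Lpot k) x - Qp k (Xt ε f g x) x) * ((scut ψ (ρ / 2 ^ 6) x - 1) * φ x)| ≤
      (408 * (64 * 128 ^ 2 * S + 128 ^ 3) + 64 * 128 ^ 2) * A * ε * M := by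
  have hρ := K.hρ
  have he := K.epos
  have hA := K.hA
  have h4 := K.h4
  have hr : 0 < ρ / 2 ^ 6 := by positivity
  have e0 := phi_end hs
  have inδ : ∀ x ∈ Icc (-ρ) ρ, x ∈ Ioo (-δ) δ := fun x hx => ⟨by linarith [hx.1], by linarith [hx.2]⟩
  have dψ : Continuous (deriv ψ) := hψ.1.continuous_deriv (by exact_mod_cast le_top)
  have dφ : Continuous (deriv φ) := hφ.1.continuous_deriv le_rfl
  have pb : ∀ x ∈ Icc (-ρ) ρ, ρ / 128 ≤ |x| → |φ x| ≤ 128 ^ 2 ∧ |deriv φ x| ≤ 128 ^ 3 / ρ := by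
    intro x hx h1
    obtain ⟨p0, p1⟩ := hφ.2.2.2 x (inδ x hx)
    have hx2 : (ρ / 128) ^ 2 ≤ |x| ^ 2 := by gcongr
    have hx3 : (ρ / 128) ^ 3 ≤ |x| ^ 3 := by gcongr
    constructor
    · refine p0.trans ?_
      rw [div_le_iff₀ (by positivity)]
      rw [K.hε] at *
      nlinarith [sq_nonneg (ρ ^ 2)]
    · refine p1.trans ?_
      rw [div_le_div_iff₀ (by positivity) hρ]
      rw [K.hε] at *
      have : 0 < (ρ ^ 2) ^ 3 := by positivity
      nlinarith
  have sc : ∀ x, |x| < ρ / 128 → scut ψ (ρ / 2 ^ 6) x - 1 = 0 ∧ deriv ψ (x / (ρ / 2 ^ 6)) = 0 := by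
    intro x hx
    constructor
    · rw [scut_one hψ hr (by linarith)]; ring
    · apply psi_d0 hψ
      rw [abs_div, abs_of_pos hr, div_lt_iff₀ hr]; linarith
  have s1 : ∀ x, |scut ψ (ρ / 2 ^ 6) x - 1| ≤ 1 := by
    intro x
    have := hψ.2.2.1 (x / (ρ / 2 ^ 6))
    unfold scut
    rw [abs_le]; constructor <;> linarith [this.1, this.2]
  have hF : ∀ x ∈ Icc (-ρ) ρ, HasDerivAt (fun x => (scut ψ (ρ / 2 ^ 6) x - 1) * φ x)
      (deriv ψ (x / (ρ / 2 ^ 6)) * (1 / (ρ / 2 ^ 6)) * φ x + (scut ψ (ρ / 2 ^ 6) x - 1) * deriv φ x) x := by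
    intro x _
    have d1 : HasDerivAt (fun x => scut ψ (ρ / 2 ^ 6) x) (deriv ψ (x / (ρ / 2 ^ 6)) * (1 / (ρ / 2 ^ 6))) x := by
      have q1 : HasDerivAt ψ (deriv ψ (x / (ρ / 2 ^ 6))) (x / (ρ / 2 ^ 6)) :=
        (hψ.1.differentiable (by simp)).differentiableAt.hasDerivAt
      have q2 : HasDerivAt (fun x : ℝ => x / (ρ / 2 ^ 6)) (1 / (ρ / 2 ^ 6)) x := (hasDerivAt_id' x).div_const _
      exact q1.comp x q2
    have d2 : HasDerivAt φ (deriv φ x) x := (hφ.1.differentiable (by simp)).differentiableAt.hasDerivAt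
    exact (d1.sub_const 1).fun_mul d2
  have hc : Continuous (fun x => deriv ψ (x / (ρ / 2 ^ 6)) * (1 / (ρ / 2 ^ 6)) * φ x + (scut ψ (ρ / 2 ^ 6) x - 1) * deriv φ x) := by
    have c1 : Continuous ψ := hψ.1.continuous
    have c2 : Continuous φ := hφ.1.continuous
    unfold scut
    fun_prop
  have hX : ∀ x ∈ Ioo (-(4 * ρ)) (4 * ρ), HasDerivAt (Xt ε f g) (f1 x + g1 x) x ∧ ε ≤ Xt ε f g x ∧
      Xt ε f g x ≤ 34 * A * ε ∧ |f1 x + g1 x| ≤ 8 * A * ρ := by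
    intro x hx
    refine ⟨?_, (K.XY hx hx).1, (K.XY hx hx).2, ?_⟩
    · exact ((K.Hf.d1 x (K.sub4 hx)).const_add (2 * ε)).fun_add (K.Hg.d1 x (K.sub4 hx))
    · have := K.Hf.b1 (K.sub4 hx)
      have := K.Hg.b1 (K.sub4 hx)
      have := abs_add_le (f1 x) (g1 x)
      have := Ioo_abs.1 hx
      nlinarith
  obtain ⟨i1, i2⟩ := H.GQ hM hρ (by linarith : ρ ≤ 2 * ρ) (s := Ioo (-(4 * ρ)) (4 * ρ)) isOpen_Ioo
    (fun x hx => ⟨by linarith [hx.1], by linarith [hx.2]⟩) he hX hF hc.continuousOn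
    (by rw [e0.1, mul_zero]) (by rw [e0.2, mul_zero]) (B0 := 128 ^ 2) (B1 := (64 * 128 ^ 2 * S + 128 ^ 3) / ρ)
    (by
      intro x hx
      by_cases h1 : |x| < ρ / 128
      · rw [(sc x h1).1]; norm_num
      · push Not at h1
        have := pb x hx h1
        rw [abs_mul]
        calc _ ≤ 1 * (128:ℝ) ^ 2 := by gcongr; exacts [s1 x, this.1]
          _ = _ := by ring)
    (by
      intro x hx
      by_cases h1 : |x| < ρ / 128
      · rw [(sc x h1).1, (sc x h1).2]; simp; positivity
      · push Not at h1
        have := pb x hx h1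
        refine (abs_add_le _ _).trans ?_
        rw [abs_mul, abs_mul, abs_mul, abs_of_pos (by positivity : 0 < 1 / (ρ / 2 ^ 6))]
        calc _ ≤ S * (1 / (ρ / 2 ^ 6)) * (128:ℝ) ^ 2 + 1 * (128 ^ 3 / ρ) := by
              gcongr; exacts [hS _, this.1, s1 x, this.2]
          _ = _ := by field_simp; ring)
  refine ⟨i1, i2.trans (le_of_eq ?_)⟩
  rw [K.hε]
  field_simp
  ring

lemma Cx.piece2 (K : Cx δ A ε ρ f f1 f2 g g1 g2) {k : ℝ → ℝ} {M : ℝ} (hM : 0 < M)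
    (H : BH k M (2 * ρ)) (hφ : InC2 δ ε φ) (hs : tsupport φ ⊆ Ioo (-ρ) ρ) :
    IntervalIntegrable (fun x => deriv (Lpot k) x * (f1 x ^ 2 / (1 + f1 x ^ 2) * φ x)) volume (-ρ) ρ ∧
    |∫ x in (-ρ)..ρ, deriv (Lpot k) x * (f1 x ^ 2 / (1 + f1 x ^ 2) * φ x)| ≤ 120 * A ^ 2 * ε * M := by
  have hρ := K.hρ
  have he := K.epos
  have hA := K.hA
  have h4 := K.h4
  have e0 := phi_end hs
  have inδ : ∀ x ∈ Icc (-ρ) ρ, x ∈ Ioo (-δ) δ := fun x hx => ⟨by linarith [hx.1], by linarith [hx.2]⟩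
  have dφ : Continuous (deriv φ) := hφ.1.continuous_deriv le_rfl
  have hF : ∀ x ∈ Icc (-ρ) ρ, HasDerivAt (fun x => f1 x ^ 2 / (1 + f1 x ^ 2) * φ x)
      (2 * f1 x * f2 x / (1 + f1 x ^ 2) ^ 2 * φ x + f1 x ^ 2 / (1 + f1 x ^ 2) * deriv φ x) x := by
    intro x hx
    have d1 := K.Hf.d2 x (inδ x hx)
    have d2 : HasDerivAt φ (deriv φ x) x := (hφ.1.differentiable (by simp)).differentiableAt.hasDerivAt
    have d3 : HasDerivAt (fun x => f1 x ^ 2) (2 * f1 x * f2 x) x := by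
      have := d1.fun_pow 2
      norm_num at this
      exact this
    have d4 : HasDerivAt (fun x => 1 + f1 x ^ 2) (2 * f1 x * f2 x) x := d3.const_add 1
    have d5 := (d3.fun_div d4 (by positivity)).fun_mul d2
    have : (2 * f1 x * f2 x * (1 + f1 x ^ 2) - f1 x ^ 2 * (2 * f1 x * f2 x)) = 2 * f1 x * f2 x := by ring
    rw [this] at d5
    exact d5
  have cf1 : ContinuousOn f1 (Icc (-ρ) ρ) := fun x hx => (K.Hf.d2 x (inδ x hx)).continuousAt.continuousWithinAt
  have cf2 : ContinuousOn f2 (Icc (-ρ) ρ) := K.Hf.c2.mono inδ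
  have cφ : Continuous φ := hφ.1.continuous
  have hc : ContinuousOn (fun x => 2 * f1 x * f2 x / (1 + f1 x ^ 2) ^ 2 * φ x + f1 x ^ 2 / (1 + f1 x ^ 2) * deriv φ x) (Icc (-ρ) ρ) := by
    have n1 : ∀ x ∈ Icc (-ρ) ρ, (1 + f1 x ^ 2) ^ 2 ≠ 0 := fun x _ => by positivity
    have n2 : ∀ x ∈ Icc (-ρ) ρ, (1 + f1 x ^ 2) ≠ 0 := fun x _ => by positivity
    fun_prop (disch := assumption)
  have hcF : ContinuousOn (fun x => f1 x ^ 2 / (1 + f1 x ^ 2) * φ x) (uIcc (-ρ) ρ) := by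
    rw [uIcc_of_le (by linarith)]
    exact fun x hx => (hF x hx).continuousAt.continuousWithinAt
  refine ⟨(H.L_AC' hρ (by linarith)).intervalIntegrable_deriv.mul_continuousOn hcF, ?_⟩
  have := H.GF hM hρ (by linarith : ρ ≤ 2 * ρ) hF hc (by rw [e0.1, mul_zero]) (by rw [e0.2, mul_zero]) (B := A ^ 2 * ε)
    (by
      intro x hx
      rw [abs_mul, abs_of_nonneg (by positivity : 0 ≤ f1 x ^ 2 / (1 + f1 x ^ 2))]
      have p0 := (hφ.2.2.2 x (inδ x hx)).1
      have b1 := K.Hf.b1 (inδ x hx)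
      have b2 : f1 x ^ 2 ≤ (A * |x|) ^ 2 := by rw [← sq_abs]; gcongr
      have b3 : f1 x ^ 2 / (1 + f1 x ^ 2) ≤ f1 x ^ 2 := div_le_self (by positivity) (by nlinarith [sq_nonneg (f1 x)])
      calc _ ≤ (A * |x|) ^ 2 * (ε / (ε ^ 2 + |x| ^ 2)) := by gcongr; exact b3.trans b2
        _ = A ^ 2 * ε * (|x| ^ 2 / (ε ^ 2 + |x| ^ 2)) := by ring
        _ ≤ A ^ 2 * ε * 1 := by
          gcongr
          rw [div_le_one (by positivity)]; nlinarith
        _ = _ := by ring)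
  refine this.trans ?_
  have hρ1 : ρ ≤ 1 := by
    have := K.he1; rw [K.hε] at this; nlinarith
  calc _ = 120 * A ^ 2 * ε * M * ρ := by ring
    _ ≤ 120 * A ^ 2 * ε * M * 1 := by gcongr
    _ = _ := by ring

lemma Cx.piece3 (K : Cx δ A ε ρ f f1 f2 g g1 g2) {E : ℝ → ℝ} {M : ℝ} (hM : 0 < M) (hl : 1 ≤ log (1 / ε))
    (hE : ∀ α ∈ Ioo (-ρ) ρ, |E α| ≤ M * A ^ 2 * (12000000000 * ε + 272 * |α| + 136 * ε * log (1 / ε)))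
    (hφ : InC2 δ ε φ) :
    |∫ α in Ioo (-ρ) ρ, E α * φ α| ≤ 60000000000 * A ^ 2 * ε * log (1 / ε) * M := by
  have hρ := K.hρ
  have he := K.epos
  have hA := K.hA
  have h4 := K.h4
  have i1 := poisson_Ioo (e := ε) (b := -ρ) (c := ρ) (α := 0) he
  have i2 := log_int_le he K.he1 hρ.le (by rw [K.hε]; nlinarith)
  rw [intervalIntegral.integral_of_le (by linarith), integral_Ioc_eq_integral_Ioo] at i2
  have j2 : IntegrableOn (fun x => |x| * (ε / (x ^ 2 + ε ^ 2))) (Ioo (-ρ) ρ) := by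
    have : Continuous (fun x : ℝ => |x| * (ε / (x ^ 2 + ε ^ 2))) := by
      have : ∀ x : ℝ, x ^ 2 + ε ^ 2 ≠ 0 := fun x => by positivity
      fun_prop (disch := assumption)
    exact this.integrableOn_Icc.mono_set Ioo_subset_Icc_self
  simp only [zero_sub, neg_sq] at i1
  set l := log (1 / ε)
  have k1 := i1.1.const_mul (M * A ^ 2 * (12000000000 * ε + 136 * ε * l))
  have k2 := j2.const_mul (M * A ^ 2 * 272)
  have q1 : ∫ x in Ioo (-ρ) ρ, M * A ^ 2 * (12000000000 * ε + 136 * ε * l) * (ε / (x ^ 2 + ε ^ 2)) =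
    M * A ^ 2 * (12000000000 * ε + 136 * ε * l) * ∫ x in Ioo (-ρ) ρ, (ε / (x ^ 2 + ε ^ 2)) := integral_const_mul _ _
  have q2 : ∫ x in Ioo (-ρ) ρ, M * A ^ 2 * 272 * (|x| * (ε / (x ^ 2 + ε ^ 2))) =
    M * A ^ 2 * 272 * ∫ x in Ioo (-ρ) ρ, |x| * (ε / (x ^ 2 + ε ^ 2)) := integral_const_mul _ _
  refine le_trans (le_of_eq (Real.norm_eq_abs _).symm) ?_
  have st : ‖∫ α in Ioo (-ρ) ρ, E α * φ α‖ ≤ ∫ x in Ioo (-ρ) ρ,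
      (M * A ^ 2 * (12000000000 * ε + 136 * ε * l) * (ε / (x ^ 2 + ε ^ 2)) + M * A ^ 2 * 272 * (|x| * (ε / (x ^ 2 + ε ^ 2)))) := by
    apply norm_integral_le_of_norm_le (k1.add k2)
    filter_upwards [ae_restrict_mem measurableSet_Ioo] with x hx
    have p0 := (hφ.2.2.2 x ⟨by linarith [hx.1], by linarith [hx.2]⟩).1
    rw [sq_abs, add_comm] at p0
    rw [Real.norm_eq_abs, abs_mul]
    calc _ ≤ (M * A ^ 2 * (12000000000 * ε + 272 * |x| + 136 * ε * l)) * (ε / (x ^ 2 + ε ^ 2)) := by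
          have := hE x hx
          gcongr
      _ = _ := by simp only [Pi.add_apply]; ring
  refine st.trans ?_
  rw [integral_add k1 k2, q1, q2]
  have l0 : 0 ≤ l := by linarith
  calc _ ≤ M * A ^ 2 * (12000000000 * ε + 136 * ε * l) * 4 + M * A ^ 2 * 272 * (2 * ε * l) := by
        gcongr
        exact i1.2
    _ = M * A ^ 2 * ε * (48000000000 * 1 + 1088 * l) := by ring
    _ ≤ M * A ^ 2 * ε * (48000000000 * l + 1088 * l) := by gcongr
    _ ≤ M * A ^ 2 * ε * (60000000000 * l) := by gcongr; nlinarith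
    _ = _ := by ring
end

lemma sum3 {s : Set ℝ} {P Q E : ℝ → ℝ} {a b c : ℝ} (hP : IntegrableOn P s) (hQ : IntegrableOn Q s)
    (ha : |∫ x in s, P x| ≤ a) (hb : |∫ x in s, Q x| ≤ b) (hc : |∫ x in s, E x| ≤ c) :
    |∫ x in s, (P x + Q x + E x)| ≤ a + b + c := by
  have hPQ : IntegrableOn (fun x => P x + Q x) s := hP.add hQ
  by_cases hE : IntegrableOn E s
  · rw [integral_add hPQ hE, integral_add hP hQ]
    refine (abs_add_le _ _).trans ?_
    have := abs_add_le (∫ x in s, P x) (∫ x in s, Q x)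
    linarith
  · rw [integral_undef, abs_zero]
    · linarith [(abs_nonneg _).trans ha, (abs_nonneg _).trans hb, (abs_nonneg _).trans hc]
    · intro hh
      apply hE
      have : IntegrableOn (fun x => (P x + Q x + E x) - (P x + Q x)) s := hh.sub hPQ
      simpa using this

lemma ae_scale {s : Set ℝ} {T W : ℝ → ℝ} {c B : ℝ} (hc : |c| ≤ 1) (hW : |∫ x in s, W x| ≤ B)
    (hT : ∀ᵐ x ∂(volume.restrict s), T x = c * W x) : |∫ x in s, T x| ≤ B := by
  rw [integral_congr_ae hT, integral_const_mul, abs_mul]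
  exact (mul_le_of_le_one_left (abs_nonneg _) hc).trans hW

section
variable {δ A ε ρ : ℝ} {f f1 f2 g g1 g2 ψ h φ : ℝ → ℝ}

lemma Cx.core (K : Cx δ A ε ρ f f1 f2 g g1 g2) (hψ : IsCutoff ψ) {M S : ℝ} (hM : 0 < M)
    (H : BH (indicator (Ioo (-(2 * ρ)) (2 * ρ)) h) M (2 * ρ)) (hl : 1 ≤ log (1 / ε))
    (hS0 : 0 ≤ S) (hS : ∀ t, |deriv ψ t| ≤ S) (hφ : InC2 δ ε φ) (hs : tsupport φ ⊆ Ioo (-ρ) ρ) :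
    |∫ α in Ioo (-ρ) ρ, (Hop ψ ε f g h α + T4 ψ ε g f h α - T2 ψ ε f h α) * φ α| ≤
      ((408 * (64 * 128 ^ 2 * S + 128 ^ 3) + 64 * 128 ^ 2) * A + 120 * A ^ 2 + 60000000000 * A ^ 2) *
        ε * log (1 / ε) * M := by
  have hρ := K.hρ
  have he := K.epos
  have hA := K.hA
  obtain ⟨i1, b1⟩ := K.piece1 hψ hM H hS0 hS hφ hs
  obtain ⟨i2, b2⟩ := K.piece2 hM H hφ hs
  have b3 := K.piece3 hM hl (fun α hα => K.remainder hψ H hα) hφ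
  rw [intervalIntegrable_iff_integrableOn_Ioo_of_le (by linarith)] at i1 i2
  rw [intervalIntegral.integral_of_le (by linarith), integral_Ioc_eq_integral_Ioo] at b1 b2
  have key := sum3 i1 i2 b1 b2 b3
  have pv := H.pv_ae hρ (by linarith : ρ ≤ 2 * ρ)
  have hpi : |(2 * π)⁻¹| ≤ 1 := by
    rw [abs_of_pos (by positivity)]
    apply inv_le_one_of_one_le₀
    linarith [Real.pi_gt_three]
  refine (ae_scale hpi key ?_).trans ?_
  · filter_upwards [ae_restrict_of_ae pv, ae_restrict_mem measurableSet_Ioo] with α h1 h2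
    rw [K.ident hψ H h2 (h1 h2)]
    ring
  · set l := log (1 / ε)
    set c1 := 408 * (64 * 128 ^ 2 * S + 128 ^ 3) + 64 * 128 ^ 2 with hc1
    have c10 : 0 ≤ c1 := by positivity
    calc _ = (c1 * A + 120 * A ^ 2) * ε * 1 * M + 60000000000 * A ^ 2 * ε * l * M := by ring
      _ ≤ (c1 * A + 120 * A ^ 2) * ε * l * M + 60000000000 * A ^ 2 * ε * l * M := by gcongr
      _ = _ := by ring
end

/-- **Weak comparison of `H` with `T₄ − T₂` (Lemma 3.3(ii), estimate (3.22)).**  For every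
`h ∈ L∞(I_δ)` and every `φ ∈ C₂` supported in `I_{√ε}`,
`|∫_{I_{√ε}} (H + T_{4,(g,f)} − T_{2,f})h · φ| + |∫_{I_{√ε}} (H + T_{4,(f,g)} − T_{2,g})h · φ|
 ≲ ε log(1/ε) ‖h‖_{L∞(I_{2√ε})}`, with the constant depending only on `A`, `δ` (and `ψ`). -/
theorem H_T4_T2_weak_bound (δ A : ℝ) (hδ : δ ∈ Ioc (0:ℝ) (1/100)) (hA : 1 ≤ A)
    (ψ : ℝ → ℝ) (hψ : IsCutoff ψ) :
    ∃ C : ℝ, 0 < C ∧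
      ∀ ε : ℝ, ε ∈ Ioc (0:ℝ) (δ ^ 2 / 100) →
      ∀ f g : ℝ → ℝ, GoodFG δ A ε f g →
      ∀ h : ℝ → ℝ, Measurable h → (∃ M' : ℝ, ∀ x ∈ Ioo (-δ) δ, |h x| ≤ M') →
        ∀ M : ℝ, (∀ x ∈ Ioo (-(2 * Real.sqrt ε)) (2 * Real.sqrt ε), |h x| ≤ M) →
          ∀ φ : ℝ → ℝ, InC2 δ ε φ →
            tsupport φ ⊆ Ioo (-(Real.sqrt ε)) (Real.sqrt ε) →
            |∫ α in Ioo (-(Real.sqrt ε)) (Real.sqrt ε),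
                (Hop ψ ε f g h α + T4 ψ ε g f h α - T2 ψ ε f h α) * φ α| +
              |∫ α in Ioo (-(Real.sqrt ε)) (Real.sqrt ε),
                (Hop ψ ε f g h α + T4 ψ ε f g h α - T2 ψ ε g h α) * φ α| ≤
              C * ε * Real.log (1 / ε) * M := by
  obtain ⟨S, hS0, hS⟩ := psi_bd hψ
  set C0 := (408 * (64 * 128 ^ 2 * S + 128 ^ 3) + 64 * 128 ^ 2) * A + 120 * A ^ 2 + 60000000000 * A ^ 2 with hC0
  have hC0p : 0 < C0 := by positivity
  refine ⟨2 * C0, by positivity, ?_⟩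
  intro ε hε f g hfg h hm _ M hM φ hφ hs
  obtain ⟨cf, cg, f0, g0, f10, g10, hb, hpos⟩ := hfg
  have he : 0 < ε := hε.1
  have hδ0 : 0 < δ := hδ.1
  have he2 : ε ≤ (δ / 10) ^ 2 := hε.2.trans (le_of_eq (by ring))
  have hρ : 0 < Real.sqrt ε := Real.sqrt_pos.2 he
  have hρδ : Real.sqrt ε ≤ δ / 10 := by
    rw [Real.sqrt_le_left (by positivity)]; exact he2
  have he6 : ε ≤ 1 / 1000000 := by
    refine he2.trans ?_
    have := hδ.2
    nlinarith
  have hl : 1 ≤ Real.log (1 / ε) := by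
    rw [Real.le_log_iff_exp_le (by positivity)]
    refine (Real.exp_one_lt_d9.le).trans ?_
    rw [le_div_iff₀ he]
    nlinarith
  have Hf := ff_of hδ0 cf f0 f10 (A := A) (fun x hx => by
    linarith [hb x hx 2 (by norm_num), abs_nonneg (iteratedDerivWithin 2 g (Ioo (-δ) δ) x)])
  have Hg := ff_of hδ0 cg g0 g10 (A := A) (fun x hx => by
    linarith [hb x hx 2 (by norm_num), abs_nonneg (iteratedDerivWithin 2 f (Ioo (-δ) δ) x)])
  have K : Cx δ A ε (Real.sqrt ε) f (deriv f) (deriv (deriv f)) g (deriv g) (deriv (deriv g)) :=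
    ⟨hA, hρ, (Real.sq_sqrt he.le).symm, rfl, by linarith, by linarith, Hf, Hg, hpos⟩
  have hM0 : 0 ≤ M := (abs_nonneg _).trans (hM 0 ⟨by linarith, by linarith⟩)
  have main : ∀ M1 : ℝ, M < M1 → |∫ α in Ioo (-(Real.sqrt ε)) (Real.sqrt ε),
                (Hop ψ ε f g h α + T4 ψ ε g f h α - T2 ψ ε f h α) * φ α| +
              |∫ α in Ioo (-(Real.sqrt ε)) (Real.sqrt ε),
                (Hop ψ ε f g h α + T4 ψ ε f g h α - T2 ψ ε g h α) * φ α| ≤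
              2 * C0 * ε * Real.log (1 / ε) * M1 := by
    intro M1 hM1
    have hM1p : 0 < M1 := hM0.trans_lt hM1
    have H : BH (indicator (Ioo (-(2 * Real.sqrt ε)) (2 * Real.sqrt ε)) h) M1 (2 * Real.sqrt ε) := by
      refine ⟨hm.indicator measurableSet_Ioo, fun x => ?_, fun x hx => indicator_of_notMem hx h⟩
      by_cases hx : x ∈ Ioo (-(2 * Real.sqrt ε)) (2 * Real.sqrt ε)
      · rw [indicator_of_mem hx]; exact (hM x hx).trans hM1.le
      · rw [indicator_of_notMem hx, abs_zero]; exact hM1p.le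
    have r1 := K.core hψ hM1p H hl hS0 hS hφ hs
    have r2 := K.symm.core hψ hM1p H hl hS0 hS hφ hs
    have hX : Xt ε g f = Xt ε f g := by funext x; unfold Xt; ring
    have hH : ∀ α, Hop ψ ε g f h α = Hop ψ ε f g h α := by
      intro α; unfold Hop Hker; rw [hX]
    simp only [hH] at r2
    rw [← hC0] at r1 r2
    linarith
  apply le_of_forall_pos_le_add
  intro η hη
  set D := 2 * C0 * ε * Real.log (1 / ε) with hD
  have hDp : 0 < D := by
    have : 0 < Real.log (1 / ε) := by linarith
    positivity
  have := main (M + η / D) (by linarith [div_pos hη hDp])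
  refine this.trans (le_of_eq ?_)
  rw [mul_add, mul_div_cancel₀ _ hDp.ne']
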